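/- arXiv:1709.09598 — 9 statements merged into one kernel-verified Lean document; each statement's English description precedes it below -/
import Mathlib

section
/- Let G, H be groups and g ∈ G ≀ H such that σ(g) has infinite order; let h ∈ H and m ∈ ℕ. Set F = supp(g) ∩ {σ(g)^{−i}h : i ∈ [0, m−1]}. Then F is linearly ordered by ≼_{σ(g)} (any two elements of F are comparable), and τ(g^m)(h) equals the product of the elements τ(g)(h') for h' ∈ F, taken in increasing order with respect to ≼_{σ(g)}. -/
namespace WreathPaper

open Function

variable (G H : Type*) [Group G] [Group H]

/-- The automorphism of `H → G` (pointwise multiplication) given by translation by `h`. -/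
def wreathAut (h : H) : MulAut (H → G) where
  toFun f := fun a => f (h⁻¹ * a)
  invFun f := fun a => f (h * a)
  left_inv f := by funext a; simp
  right_inv f := by funext a; simp
  map_mul' f g := rfl

/-- The action of `H` on `H → G` by translation, as a homomorphism into `MulAut`. -/
def wreathphi : H →* MulAut (H → G) where
  toFun := wreathAut G H
  map_one' := by
    apply MulEquiv.toMonoidHom_injective
    ext f a
    simp [wreathAut]
  map_mul' h₁ h₂ := by
    apply MulEquiv.toMonoidHom_injective
    ext f a
    simp [wreathAut, mul_assoc]

lemma finite_mulSupport_shift {f : H → G} (hf : (mulSupport f).Finite) (h : H) :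
    (mulSupport fun a => f (h * a)).Finite := by
  have : (fun a : H => f (h * a)) = f ∘ (fun a => h * a) := rfl
  rw [this, Function.mulSupport_comp_eq_preimage]
  exact hf.preimage (fun x _ y _ hxy => by simpa using hxy)

/-- The restricted wreath product `G ≀ H`, as the subgroup of the (unrestricted)
semidirect product `(H → G) ⋊ H` consisting of pairs whose first component has
finite support. -/
def RW : Subgroup ((H → G) ⋊[wreathphi G H] H) where
  carrier := {x | (mulSupport x.left).Finite}
  one_mem' := by
    simp only [Set.mem_setOf_eq, SemidirectProduct.one_left]
    simp
  mul_mem' := by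
    intro a b ha hb
    simp only [Set.mem_setOf_eq, SemidirectProduct.mul_left] at *
    refine Set.Finite.subset (Set.Finite.union ha
      (finite_mulSupport_shift G H hb a.right⁻¹)) ?_
    exact Function.mulSupport_mul _ _
  inv_mem' := by
    intro a ha
    simp only [Set.mem_setOf_eq, SemidirectProduct.inv_left] at *
    have : (wreathphi G H a.right⁻¹ a.left⁻¹ : H → G)
        = fun x => (a.left (a.right * x))⁻¹ := by
      funext x
      simp [wreathphi, wreathAut]
    rw [this]
    have h2 : (mulSupport fun x => (a.left (a.right * x))⁻¹)
        = mulSupport fun x => a.left (a.right * x) := by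
      simp [Function.mulSupport_inv]
    rw [h2]
    exact finite_mulSupport_shift G H ha a.right

/-- The projection `σ : G ≀ H → H`. -/
def σw (x : RW G H) : H := (x : (H → G) ⋊[wreathphi G H] H).right

/-- The projection `τ : G ≀ H → G^(H)`. -/
def τw (x : RW G H) : H → G := (x : (H → G) ⋊[wreathphi G H] H).left

/-- The canonical embedding of `G` into `G ≀ H`: `g ↦ (f_g, 1)`. -/
def embG [DecidableEq H] (g : G) : RW G H :=
  ⟨⟨Pi.mulSingle (1 : H) g, 1⟩, by
    exact Set.Finite.subset (Set.finite_singleton (1 : H))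
      Pi.mulSupport_mulSingle_subset⟩

/-- The canonical embedding of `H` into `G ≀ H`: `h ↦ (𝟙, h)`. -/
def embH (h : H) : RW G H :=
  ⟨⟨1, h⟩, by simp [RW]⟩

end WreathPaper

open WreathPaper Function in
lemma tau_pow_succ_aux {G H : Type*} [Group G] [Group H]
    (g : ↥(RW G H)) (h : H) (m : ℕ) :
    τw G H (g ^ (m + 1)) h = τw G H g h * τw G H (g ^ m) ((σw G H g)⁻¹ * h) := by
  rw [pow_succ']
  rfl

open WreathPaper Function in
lemma list_aux {G H : Type*} [Group G] [Group H]
    (g : ↥(RW G H)) (m : ℕ)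
    (hinf : ∀ n : ℕ, σw G H g ^ n = 1 → n = 0) : ∀ h : H,
    (∃ l : List H, l.Nodup ∧
      (∀ x : H,
        x ∈ l ↔ x ∈ mulSupport (τw G H g) ∩ {x | ∃ i < m, x = (σw G H g)⁻¹ ^ i * h}) ∧
      l.Pairwise (fun a b => ∃ n : ℕ, a = σw G H g ^ n * b) ∧
      τw G H (g ^ m) h = (l.map (τw G H g)).prod) := by
  induction m with
  | zero =>
    intro h
    refine ⟨[], List.nodup_nil, by simp, List.Pairwise.nil, ?_⟩
    rw [pow_zero]
    rfl
  | succ m ih =>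
    intro h
    obtain ⟨l, hn, hm, hp, ht⟩ := ih ((σw G H g)⁻¹ * h)
    have key : ∀ x : H, (∃ i < m + 1, x = (σw G H g)⁻¹ ^ i * h) ↔
        x = h ∨ ∃ i < m, x = (σw G H g)⁻¹ ^ i * ((σw G H g)⁻¹ * h) := by
      intro x
      constructor
      · rintro ⟨i, hi, rfl⟩
        cases i with
        | zero => left; simp
        | succ i => exact Or.inr ⟨i, by omega, by rw [pow_succ, mul_assoc]⟩
      · rintro (rfl | ⟨i, hi, rfl⟩)
        · exact ⟨0, by omega, by simp⟩
        · exact ⟨i + 1, by omega, by rw [pow_succ, mul_assoc]⟩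
    by_cases h1 : τw G H g h = 1
    · refine ⟨l, hn, ?_, hp, ?_⟩
      · intro x
        rw [hm, Set.mem_inter_iff, Set.mem_inter_iff, Set.mem_setOf_eq, Set.mem_setOf_eq, key]
        constructor
        · rintro ⟨ha, hb⟩
          exact ⟨ha, Or.inr hb⟩
        · rintro ⟨ha, rfl | hb⟩
          · exact absurd h1 ha
          · exact ⟨ha, hb⟩
      · rw [tau_pow_succ_aux, h1, one_mul, ht]
    · refine ⟨h :: l, ?_, ?_, ?_, ?_⟩
      · rw [List.nodup_cons]
        refine ⟨fun hl => ?_, hn⟩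
        obtain ⟨-, i, -, hi⟩ := (hm h).1 hl
        rw [← mul_assoc, ← pow_succ, right_eq_mul, inv_pow, inv_eq_one] at hi
        exact absurd (hinf _ hi) (by omega)
      · intro x
        rw [List.mem_cons, hm, Set.mem_inter_iff, Set.mem_inter_iff, Set.mem_setOf_eq,
          Set.mem_setOf_eq, key]
        constructor
        · rintro (rfl | ⟨ha, hb⟩)
          · exact ⟨h1, Or.inl rfl⟩
          · exact ⟨ha, Or.inr hb⟩
        · rintro ⟨ha, rfl | hb⟩
          · exact Or.inl rfl
          · exact Or.inr ⟨ha, hb⟩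
      · refine List.Pairwise.cons ?_ hp
        intro b hb
        obtain ⟨-, i, -, hi⟩ := (hm b).1 hb
        refine ⟨i + 1, ?_⟩
        rw [hi, ← mul_assoc ((σw G H g)⁻¹ ^ i), ← pow_succ, inv_pow, mul_inv_cancel_left]
      · rw [tau_pow_succ_aux, ht, List.map_cons, List.prod_cons]

open WreathPaper Function in
/-- Let `g ∈ G ≀ H` with `σ(g)` of infinite order, `h ∈ H` and `m ∈ ℕ`, and let
`F = supp(g) ∩ {σ(g)⁻ⁱ h : i ∈ [0, m−1]}`.  Then `F` is linearly ordered by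
`≼_{σ(g)}` (where `a ≼_c b ↔ ∃ n : ℕ, a = cⁿ b`), and `τ(gᵐ)(h)` equals the
product of the `τ(g)(h')` for `h' ∈ F`, taken in increasing `≼_{σ(g)}`-order
(expressed via an enumeration of `F` as a `≼_{σ(g)}`-sorted duplicate-free
list). -/
theorem statement1 {G H : Type*} [Group G] [Group H]
    (g : ↥(RW G H)) (h : H) (m : ℕ)
    (hinf : ∀ n : ℕ, σw G H g ^ n = 1 → n = 0) :
    (∀ a ∈ mulSupport (τw G H g) ∩ {x | ∃ i < m, x = (σw G H g)⁻¹ ^ i * h},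
      ∀ b ∈ mulSupport (τw G H g) ∩ {x | ∃ i < m, x = (σw G H g)⁻¹ ^ i * h},
        (∃ n : ℕ, a = σw G H g ^ n * b) ∨ (∃ n : ℕ, b = σw G H g ^ n * a)) ∧
    (∃ l : List H, l.Nodup ∧
      (∀ x : H,
        x ∈ l ↔ x ∈ mulSupport (τw G H g) ∩ {x | ∃ i < m, x = (σw G H g)⁻¹ ^ i * h}) ∧
      l.Pairwise (fun a b => ∃ n : ℕ, a = σw G H g ^ n * b) ∧
      τw G H (g ^ m) h = (l.map (τw G H g)).prod) := by
  refine ⟨?_, list_aux g m hinf h⟩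
  rintro a ⟨-, i, -, rfl⟩ b ⟨-, j, -, rfl⟩
  rcases le_total i j with hij | hij
  · left
    obtain ⟨k, rfl⟩ := Nat.exists_eq_add_of_le' hij
    exact ⟨k, by rw [pow_add, mul_assoc, inv_pow _ k, mul_inv_cancel_left]⟩
  · right
    obtain ⟨k, rfl⟩ := Nat.exists_eq_add_of_le' hij
    exact ⟨k, by rw [pow_add, mul_assoc, inv_pow _ k, mul_inv_cancel_left]⟩
end

section
/- Let G, H, K be groups and let n ∈ ℕ be such that K contains at least n pairwise distinct elements (i.e., there is an injection from Fin n into K). Then there exists an injective group homomorphism from Gⁿ ≀ H into G ≀ (H × K), where Gⁿ denotes the n-fold direct product of G. -/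
open WreathPaper Function in
/-- Let `G, H, K` be groups and `n ∈ ℕ` such that `K` has at least `n` pairwise
distinct elements.  Then there is an injective group homomorphism from
`Gⁿ ≀ H` into `G ≀ (H × K)`. -/
theorem statement4 (G H K : Type*) [Group G] [Group H] [Group K] (n : ℕ)
    (hK : ∃ ι : Fin n → K, Function.Injective ι) :
    ∃ φ : ↥(RW (Fin n → G) H) →* ↥(RW G (H × K)), Function.Injective φ := by
  obtain ⟨ι, hι⟩ := hK
  have hmul : ∀ u v : Fin n → G, extend ι (u * v) (1 : K → G)
      = extend ι u 1 * extend ι v 1 := by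
    intro u v
    have := Function.extend_mul ι u v (1 : K → G) 1
    rwa [one_mul] at this
  have hfin : ∀ f : H → Fin n → G, (mulSupport f).Finite →
      (mulSupport (fun p : H × K => extend ι (f p.1) (1 : K → G) p.2)).Finite := by
    intro f hf
    refine (hf.prod (Set.finite_range ι)).subset ?_
    rintro ⟨h, k⟩ hp
    simp only [mem_mulSupport] at hp
    refine ⟨fun h0 => hp ?_, ?_⟩
    · simp only at h0
      simp only [h0]
      rw [Function.extend_one]
      rfl
    · by_contra hk
      exact hp (Function.extend_apply' _ _ _ hk)
  refine ⟨MonoidHom.mk' (fun x => ⟨⟨fun p => extend ι (x.1.left p.1) (1 : K → G) p.2,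
    (x.1.right, 1)⟩, hfin _ x.2⟩) ?_, ?_⟩
  · intro a b
    apply Subtype.ext
    apply SemidirectProduct.ext
    · funext p
      change extend ι (a.1.left p.1 * b.1.left (a.1.right⁻¹ * p.1)) (1 : K → G) p.2
        = extend ι (a.1.left p.1) (1 : K → G) p.2
          * extend ι (b.1.left (a.1.right⁻¹ * p.1)) (1 : K → G) ((1 : K)⁻¹ * p.2)
      rw [hmul, inv_one, one_mul]
      rfl
    · change (a.1.right * b.1.right, (1 : K)) = (a.1.right * b.1.right, (1 : K) * 1)
      rw [one_mul]
  · intro a b hab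
    have h1 := congrArg Subtype.val hab
    have hl := congrArg SemidirectProduct.left h1
    have hr := congrArg SemidirectProduct.right h1
    apply Subtype.ext
    apply SemidirectProduct.ext
    · funext h i
      have h2 : extend ι (a.1.left h) (1 : K → G) (ι i) = extend ι (b.1.left h) (1 : K → G) (ι i) :=
        congrFun hl (h, ι i)
      rwa [hι.extend_apply, hι.extend_apply] at h2
    · exact congrArg Prod.fst hr
end

section
/- Let G be a group with generating set Σ ⊆ G, and consider the wreath product G ≀ ℤ. If (f, d) ∈ G ≀ ℤ can be written as a product s₁s₂⋯s_n of n elements, where each s_i is either of the form (f_a, 0) with a ∈ Σ or of the form (𝟙, 1) or (𝟙, −1), then there exists an interval [a, b] ⊆ ℤ with b − a ≤ n such that {0, d} ∪ supp(f) ⊆ [a, b]. -/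
namespace WreathPaper

lemma τw_mul_embG {G : Type*} [Group G] (g : G) (x : RW G (Multiplicative ℤ)) (z : ℤ)
    (hz : z ≠ 0) :
    τw G (Multiplicative ℤ) (embG G (Multiplicative ℤ) g * x) (Multiplicative.ofAdd z)
      = τw G (Multiplicative ℤ) x (Multiplicative.ofAdd z) := by
  have h : (Multiplicative.ofAdd z) ≠ 1 := by
    intro h
    exact hz (Multiplicative.ofAdd.injective h)
  simp [τw, embG, Pi.mulSingle_eq_of_ne h]

lemma τw_mul_embH {G : Type*} [Group G] (e : ℤ) (x : RW G (Multiplicative ℤ)) (z : ℤ) :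
    τw G (Multiplicative ℤ) (embH G (Multiplicative ℤ) (Multiplicative.ofAdd e) * x)
      (Multiplicative.ofAdd z)
      = τw G (Multiplicative ℤ) x (Multiplicative.ofAdd (z - e)) := by
  have h : (Multiplicative.ofAdd e)⁻¹ * Multiplicative.ofAdd z
      = Multiplicative.ofAdd (z - e) := by
    rw [← ofAdd_neg, ← ofAdd_add]; congr 1; ring
  rw [← h]
  change (1 : G) * τw G (Multiplicative ℤ) x
    ((Multiplicative.ofAdd e)⁻¹ * Multiplicative.ofAdd z) = _
  rw [one_mul]

lemma σw_mul_embG {G : Type*} [Group G] (g : G) (x : RW G (Multiplicative ℤ)) :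
    σw G (Multiplicative ℤ) (embG G (Multiplicative ℤ) g * x) = σw G (Multiplicative ℤ) x := by
  simp [σw, embG]

lemma σw_mul_embH {G : Type*} [Group G] (e : ℤ) (x : RW G (Multiplicative ℤ)) :
    Multiplicative.toAdd
      (σw G (Multiplicative ℤ) (embH G (Multiplicative ℤ) (Multiplicative.ofAdd e) * x))
      = e + Multiplicative.toAdd (σw G (Multiplicative ℤ) x) := by
  simp [σw, embH]

lemma interval_aux {G : Type*} [Group G] (S : Set G) (l : List ↥(RW G (Multiplicative ℤ)))
    (hl : ∀ s ∈ l, (∃ a ∈ S, s = embG G (Multiplicative ℤ) a) ∨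
        s = embH G (Multiplicative ℤ) (Multiplicative.ofAdd 1) ∨
        s = embH G (Multiplicative ℤ) (Multiplicative.ofAdd (-1))) :
    ∃ a b : ℤ, b - a ≤ (l.length : ℤ) ∧ a ≤ 0 ∧ 0 ≤ b ∧
      a ≤ Multiplicative.toAdd (σw G (Multiplicative ℤ) l.prod) ∧
      Multiplicative.toAdd (σw G (Multiplicative ℤ) l.prod) ≤ b ∧
      ∀ z : ℤ, τw G (Multiplicative ℤ) l.prod (Multiplicative.ofAdd z) ≠ 1 → a ≤ z ∧ z ≤ b := by
  induction l with
  | nil => exact ⟨0, 0, by simp [σw, τw]⟩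
  | cons s l ih =>
    obtain ⟨a, b, h1, h2, h3, h4, h5, h6⟩ := ih fun t ht => hl t (List.mem_cons_of_mem _ ht)
    simp only [List.prod_cons, List.length_cons]
    push_cast
    rcases hl s List.mem_cons_self with ⟨g, -, rfl⟩ | rfl | rfl
    · refine ⟨a, b, by omega, h2, h3, ?_, ?_, fun z hz => ?_⟩
      · rwa [σw_mul_embG]
      · rwa [σw_mul_embG]
      · by_cases h0 : z = 0
        · omega
        · rw [τw_mul_embG _ _ _ h0] at hz
          exact h6 z hz
    · refine ⟨a, b + 1, by omega, h2, by omega, ?_, ?_, fun z hz => ?_⟩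
      · rw [σw_mul_embH]; omega
      · rw [σw_mul_embH]; omega
      · rw [τw_mul_embH] at hz
        have := h6 _ hz
        omega
    · refine ⟨a - 1, b, by omega, by omega, h3, ?_, ?_, fun z hz => ?_⟩
      · rw [σw_mul_embH]; omega
      · rw [σw_mul_embH]; omega
      · rw [τw_mul_embH] at hz
        have := h6 _ hz
        omega

end WreathPaper

open WreathPaper Function in
/-- Let `G` be a group with generating set `Σ ⊆ G` and consider `G ≀ ℤ`
(with `ℤ` written multiplicatively).  If `(f, d) ∈ G ≀ ℤ` is a product
`s₁ s₂ ⋯ s_n` where each `s_i` is of the form `(f_a, 0)` with `a ∈ Σ`, or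
`(𝟙, 1)`, or `(𝟙, −1)`, then there is an interval `[a, b] ⊆ ℤ` with
`b − a ≤ n` containing `0`, `d` and `supp f`. -/
theorem statement7 {G : Type*} [Group G] (S : Set G)
    (hS : Subgroup.closure S = ⊤)
    (w : ↥(RW G (Multiplicative ℤ))) (l : List ↥(RW G (Multiplicative ℤ)))
    (hw : w = l.prod) (n : ℕ) (hn : l.length = n)
    (hl : ∀ s ∈ l, (∃ a ∈ S, s = embG G (Multiplicative ℤ) a) ∨
        s = embH G (Multiplicative ℤ) (Multiplicative.ofAdd 1) ∨
        s = embH G (Multiplicative ℤ) (Multiplicative.ofAdd (-1))) :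
    ∃ a b : ℤ, b - a ≤ (n : ℤ) ∧
      ∀ z : ℤ, (z = 0 ∨ z = Multiplicative.toAdd (σw G (Multiplicative ℤ) w) ∨
          Multiplicative.ofAdd z ∈ mulSupport (τw G (Multiplicative ℤ) w)) →
        a ≤ z ∧ z ≤ b := by
  subst hw hn
  obtain ⟨a, b, h1, h2, h3, h4, h5, h6⟩ := interval_aux S l hl
  refine ⟨a, b, h1, ?_⟩
  rintro z (rfl | rfl | hz)
  · exact ⟨h2, h3⟩
  · exact ⟨h4, h5⟩
  · exact h6 z hz
end

section
/- Let G, H be groups. For every knapsack expression E of depth k over G ≀ H there exist r ∈ ℕ, torsion-free knapsack expressions E₁, …, E_r of depth k over G ≀ H, and affine maps φ₁, …, φ_r : ℕ^k → ℕ^k such that Sol(E) = ⋃_{i=1}^r φ_i(Sol(E_i)). -/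
namespace WreathPaper

variable {L : Type*} [Group L]

/-- Evaluation of the knapsack expression `h₀ g₁^{x₁} h₁ ⋯ g_k^{x_k} h_k`
(of depth `k`, with pairwise distinct variables `x₁, …, x_k`) at the
valuation `ν`. -/
def knapEval (k : ℕ) (h0 : L) (g h : Fin k → L) (ν : Fin k → ℕ) : L :=
  h0 * ((List.finRange k).map fun i => g i ^ ν i * h i).prod

/-- The solution set `Sol(E)` of the knapsack expression
`E = h₀ g₁^{x₁} h₁ ⋯ g_k^{x_k} h_k`. -/
def knapSol (k : ℕ) (h0 : L) (g h : Fin k → L) : Set (Fin k → ℕ) :=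
  {ν | knapEval k h0 g h ν = 1}

/-- A map `φ : ℕ^a → ℕ^b` is affine if `φ ν = A ν + μ` for a matrix
`A ∈ ℕ^{b×a}` and a vector `μ ∈ ℕ^b`. -/
def IsAffine {a b : ℕ} (φ : (Fin a → ℕ) → (Fin b → ℕ)) : Prop :=
  ∃ (A : Fin b → Fin a → ℕ) (μ : Fin b → ℕ), ∀ ν j, φ ν j = (∑ i, A j i * ν i) + μ j

end WreathPaper

open WreathPaper Function in
/-- For every knapsack expression `E` of depth `k` over `G ≀ H` there are
`r ∈ ℕ`, torsion-free knapsack expressions `E₁, …, E_r` of depth `k` over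
`G ≀ H` (i.e. each `σ(gᵢ)` is trivial or of infinite order), and affine maps
`φ₁, …, φ_r : ℕ^k → ℕ^k` with `Sol(E) = ⋃_{i=1}^r φ_i(Sol(E_i))`. -/
theorem statement8 {G H : Type*} [Group G] [Group H] (k : ℕ)
    (h0 : ↥(RW G H)) (g h : Fin k → ↥(RW G H)) :
    ∃ (r : ℕ) (h0' : Fin r → ↥(RW G H)) (g' h' : Fin r → Fin k → ↥(RW G H))
      (φ : Fin r → (Fin k → ℕ) → (Fin k → ℕ)),
      (∀ i j, σw G H (g' i j) = 1 ∨ ∀ n : ℕ, σw G H (g' i j) ^ n = 1 → n = 0) ∧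
      (∀ i, IsAffine (φ i)) ∧
      knapSol k h0 g h = ⋃ i, φ i '' knapSol k (h0' i) (g' i) (h' i) := by
  classical
  let d : Fin k → ℕ := fun j => if orderOf (σw G H (g j)) = 0 then 1 else orderOf (σw G H (g j))
  have hd : ∀ j, 0 < d j := by
    intro j
    simp only [d]
    split_ifs <;> omega
  have hσ : ∀ (x : ↥(RW G H)) (n : ℕ), σw G H (x ^ n) = σw G H x ^ n := by
    intro x n
    exact map_pow (SemidirectProduct.rightHom.comp (RW G H).subtype) x n
  let e := Fintype.equivFin (∀ j : Fin k, Fin (d j))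
  have key : ∀ (c : ∀ j : Fin k, Fin (d j)) (ν : Fin k → ℕ),
      knapEval k h0 g h (fun j => d j * ν j + (c j : ℕ)) =
      knapEval k h0 (fun j => g j ^ d j) (fun j => g j ^ (c j : ℕ) * h j) ν := by
    intro c ν
    simp only [knapEval, pow_add, pow_mul, mul_assoc]
  refine ⟨Fintype.card (∀ j : Fin k, Fin (d j)), fun _ => h0, fun _ j => g j ^ d j,
    fun i j => g j ^ (e.symm i j : ℕ) * h j,
    fun i ν j => d j * ν j + (e.symm i j : ℕ), ?_, ?_, ?_⟩
  · intro i j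
    rw [hσ]
    by_cases h1 : orderOf (σw G H (g j)) = 0
    · right
      intro n hn
      simp only [d, if_pos h1, pow_one] at hn
      have := orderOf_dvd_of_pow_eq_one hn
      rw [h1] at this
      exact Nat.eq_zero_of_zero_dvd this
    · left
      simp only [d, if_neg h1]
      exact pow_orderOf_eq_one _
  · intro i
    refine ⟨fun j l => if l = j then d j else 0, fun j => (e.symm i j : ℕ), ?_⟩
    intro ν j
    simp
  · ext ν
    simp only [Set.mem_iUnion, Set.mem_image]
    constructor
    · intro hν
      have hdm : (fun j => d j * (ν j / d j) + ν j % d j) = ν := by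
        funext j
        exact Nat.div_add_mod _ _
      refine ⟨e (fun j => ⟨ν j % d j, Nat.mod_lt _ (hd j)⟩), fun j => ν j / d j, ?_, ?_⟩
      · change knapEval _ _ _ _ _ = 1
        rw [← key]
        simp only [Equiv.symm_apply_apply]
        rw [hdm]
        exact hν
      · simp only [Equiv.symm_apply_apply]
        exact hdm
    · rintro ⟨i, μ, hμ, rfl⟩
      change knapEval _ _ _ _ _ = 1
      rw [key]
      exact hμ
end

section
/- In the setting of a fixed torsion-free knapsack expression E = g₁^{x₁}⋯g_k^{x_k}g_{k+1} over G ≀ H with variable partition V_E = S ⊎ M: let ν = μ ⊕ κ with μ ∈ ℕ^M and κ ∈ ℕ^S, let h ∈ H, and let C = A_{μ,h}. Then τ(ν(E))(h) = κ(E_C). -/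
namespace WreathPaper

variable {G H : Type*} [Group G] [Group H] {k : ℕ}

/-- The type of addresses of the torsion-free knapsack expression
`E = g₁^{x₁} ⋯ g_k^{x_k} g_{k+1}` (with bases `g 0, …, g k`): pairs `(i, h)`
with `i ∈ [1, k+1]` and `h ∈ supp(gᵢ)`. -/
def Addr (g : Fin (k + 1) → ↥(RW G H)) : Type _ :=
  {p : Fin (k + 1) × H // p.2 ∈ Function.mulSupport (τw G H (g p.1))}

/-- The evaluation `ν(E) = g₁^{ν(x₁)} ⋯ g_k^{ν(x_k)} g_{k+1}`. -/
def evalE (g : Fin (k + 1) → ↥(RW G H)) (ν : Fin k → ℕ) : ↥(RW G H) :=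
  ((List.finRange k).map fun i => g i.castSucc ^ ν i).prod * g (Fin.last k)

/-- The prefix product `σ(g₁)^{ν(x₁)} ⋯ σ(g_j)^{ν(x_j)}`. -/
def headProd (g : Fin (k + 1) → ↥(RW G H)) (ν : Fin k → ℕ) (j : ℕ) : H :=
  (((List.finRange k).take j).map fun i => σw G H (g i.castSucc) ^ ν i).prod

/-- The evaluation at `ν` of the expression `τ(a)` over `G` associated with the
address `a = (i, h)`: it is `τ(g_{k+1})(h)` if `i = k+1`, the power
`(τ(gᵢ)(h))^{ν(xᵢ)}` if `i ≤ k` and `σ(gᵢ) = 1`, and `τ(gᵢ)(h)` if `i ≤ k`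
and `σ(gᵢ) ≠ 1` (i.e. `σ(gᵢ)` of infinite order).  It only depends on the
components of `ν` belonging to `S = {xᵢ : σ(gᵢ) = 1}`. -/
noncomputable def tauVal (g : Fin (k + 1) → ↥(RW G H)) (a : Addr g)
    (ν : Fin k → ℕ) : G :=
  letI := Classical.propDecidable (σw G H (g a.1.1) = 1)
  if hlt : (a.1.1 : ℕ) < k then
    if σw G H (g a.1.1) = 1 then τw G H (g a.1.1) a.1.2 ^ ν ⟨a.1.1, hlt⟩
    else τw G H (g a.1.1) a.1.2
  else τw G H (g a.1.1) a.1.2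

/-- The set `A_{μ,h}` of all addresses `a` such that `μ'(σ(a)) = h` for some
`μ' ⊏ μ`, where `σ(a) = σ(g₁)^{x₁} ⋯ σ(g_k)^{x_k} h'` for `a = (k+1, h')` and
`σ(a) = σ(g₁)^{x₁} ⋯ σ(g_{i−1})^{x_{i−1}} σ(gᵢ)^{yᵢ} h'` for `a = (i, h')`,
`i ≤ k` (the variable `yᵢ`, present only when `σ(gᵢ)` has infinite order,
ranges over `[0, μ(xᵢ) − 1]`; factors with base `1` evaluate to `1`).  Only the
components of `ν` belonging to `M = {xᵢ : σ(gᵢ) ≠ 1}` are relevant. -/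
def clusterAt (g : Fin (k + 1) → ↥(RW G H)) (ν : Fin k → ℕ) (h : H) :
    Set (Addr g) :=
  {a | if hlt : (a.1.1 : ℕ) < k then
        ∃ y : ℕ, (σw G H (g a.1.1) ≠ 1 → y < ν ⟨a.1.1, hlt⟩) ∧
          headProd g ν (a.1.1 : ℕ) * σw G H (g a.1.1) ^ y * a.1.2 = h
      else headProd g ν k * a.1.2 = h}

/-- `le` is an admissible linear order on the addresses: a linear order such
that `(i, h) ≤ (j, h')` whenever `i < j`, and such that for `i ≤ k` with
`σ(gᵢ)` nontrivial (hence of infinite order), `h ≼_{σ(gᵢ)} h'` implies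
`(i, h) ≤ (i, h')`. -/
def GoodOrder (g : Fin (k + 1) → ↥(RW G H)) (le : Addr g → Addr g → Prop) :
    Prop :=
  (∀ a b, le a b ∨ le b a) ∧
  (∀ a b c, le a b → le b c → le a c) ∧
  (∀ a b, le a b → le b a → a = b) ∧
  (∀ a b : Addr g, a.1.1 < b.1.1 → le a b) ∧
  (∀ a b : Addr g, a.1.1 = b.1.1 → (a.1.1 : ℕ) < k → σw G H (g a.1.1) ≠ 1 →
      (∃ n : ℕ, a.1.2 = σw G H (g a.1.1) ^ n * b.1.2) → le a b)

/-- `prodOver g le C κ v` says that the evaluation `κ(E_C)` of the expression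
`E_C = ∏_{a ∈ C} τ(a)` — the product over `C` taken in increasing `le`-order,
expressed via an `le`-sorted duplicate-free enumeration of `C` — equals `v`. -/
def prodOver (g : Fin (k + 1) → ↥(RW G H)) (le : Addr g → Addr g → Prop)
    (C : Set (Addr g)) (κ : Fin k → ℕ) (v : G) : Prop :=
  ∃ l : List (Addr g), l.Nodup ∧ (∀ x, x ∈ l ↔ x ∈ C) ∧ l.Pairwise le ∧
    (l.map fun a => tauVal g a κ).prod = v

end WreathPaper

namespace WreathPaper

section Aux

variable {G H : Type*} [Group G] [Group H] {k : ℕ}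

lemma tau_mul (x y : RW G H) (h : H) :
    τw G H (x * y) h = τw G H x h * τw G H y ((σw G H x)⁻¹ * h) := rfl

lemma sig_mul (x y : RW G H) : σw G H (x * y) = σw G H x * σw G H y := rfl

lemma sig_one : σw G H 1 = 1 := rfl

lemma tau_one (h : H) : τw G H 1 h = 1 := rfl

lemma sig_pow (x : RW G H) (n : ℕ) : σw G H (x ^ n) = σw G H x ^ n := by
  induction n with
  | zero => simp [sig_one]
  | succ n ih => rw [pow_succ, sig_mul, ih, pow_succ]

lemma tau_pow (x : RW G H) (n : ℕ) (h : H) :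
    τw G H (x ^ n) h
      = ((List.range n).map fun y => τw G H x ((σw G H x ^ y)⁻¹ * h)).prod := by
  induction n with
  | zero => simp [tau_one]
  | succ n ih => rw [pow_succ, tau_mul, ih, List.range_succ, sig_pow]; simp

/-- The address with given index and position. -/
def mkAddr (g : Fin (k + 1) → ↥(RW G H)) (i : Fin (k + 1)) (h' : H)
    (hh : h' ∈ Function.mulSupport (τw G H (g i))) : Addr g := ⟨(i, h'), hh⟩

@[simp]
lemma mkAddr_val (g : Fin (k + 1) → ↥(RW G H)) (i : Fin (k + 1)) (h' : H)
    (hh : h' ∈ Function.mulSupport (τw G H (g i))) : (mkAddr g i h' hh).1 = (i, h') := rfl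

lemma exists_mk {g : Fin (k + 1) → ↥(RW G H)} (a : Addr g) :
    ∃ i h' hh, a = mkAddr g i h' hh := ⟨a.1.1, a.1.2, a.2, rfl⟩

lemma mem_cluster (g : Fin (k + 1) → ↥(RW G H)) (ν : Fin k → ℕ) (h : H) (i : Fin k) (h' : H)
    (hh : h' ∈ Function.mulSupport (τw G H (g i.castSucc))) :
    mkAddr g i.castSucc h' hh ∈ clusterAt g ν h ↔
      ∃ y : ℕ, (σw G H (g i.castSucc) ≠ 1 → y < ν i) ∧
        headProd g ν i * σw G H (g i.castSucc) ^ y * h' = h := by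
  simp [clusterAt]

/-- The list of addresses with given index and position (at most one). -/
noncomputable def mkA (g : Fin (k + 1) → ↥(RW G H)) (i : Fin (k + 1)) (h' : H) :
    List (Addr g) :=
  letI := Classical.propDecidable (h' ∈ Function.mulSupport (τw G H (g i)))
  if hh : h' ∈ Function.mulSupport (τw G H (g i)) then [mkAddr g i h' hh] else []

lemma mem_mkA (g : Fin (k + 1) → ↥(RW G H)) (i : Fin (k + 1)) (h' : H) (a : Addr g) :
    a ∈ mkA g i h' ↔ a.1 = (i, h') := by
  unfold mkA
  split_ifs with hh
  · rw [List.mem_singleton]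
    exact ⟨fun h => by rw [h]; rfl, fun h => Subtype.ext h⟩
  · simp only [List.not_mem_nil, false_iff]
    intro h
    apply hh
    have := a.2
    rw [h] at this
    exact this

lemma pairwise_mkA (g : Fin (k + 1) → ↥(RW G H)) (i : Fin (k + 1)) (h' : H)
    (R : Addr g → Addr g → Prop) : (mkA g i h').Pairwise R := by
  unfold mkA
  split_ifs <;> simp

lemma prod_mkA (g : Fin (k + 1) → ↥(RW G H)) (i : Fin (k + 1)) (h' : H)
    (f : Addr g → G) (v : G) (h1 : ∀ a : Addr g, a.1 = (i, h') → f a = v)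
    (h2 : τw G H (g i) h' = 1 → v = 1) : ((mkA g i h').map f).prod = v := by
  unfold mkA
  split_ifs with hh
  · simpa using h1 (mkAddr g i h' hh) rfl
  · rw [Function.notMem_mulSupport] at hh
    simpa using (h2 hh).symm

lemma block (g : Fin (k + 1) → ↥(RW G H))
    (htf : ∀ i : Fin k, σw G H (g i.castSucc) = 1 ∨
        ∀ n : ℕ, σw G H (g i.castSucc) ^ n = 1 → n = 0)
    (le : Addr g → Addr g → Prop) (hle : GoodOrder g le)
    (ν : Fin k → ℕ) (h : H) (i : Fin k) :
    ∃ l : List (Addr g), l.Pairwise (fun a b => le a b ∧ a ≠ b) ∧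
      (∀ a, a ∈ l ↔ a.1.1 = i.castSucc ∧ a ∈ clusterAt g ν h) ∧
      (l.map fun a => tauVal g a ν).prod =
        τw G H (g i.castSucc ^ ν i) ((headProd g ν i)⁻¹ * h) := by
  obtain ⟨-, -, -, -, hle5⟩ := hle
  by_cases hs : σw G H (g i.castSucc) = 1
  · refine ⟨mkA g i.castSucc ((headProd g ν i)⁻¹ * h), pairwise_mkA _ _ _ _, ?_, ?_⟩
    · intro a
      obtain ⟨j, h', hj, rfl⟩ := exists_mk a
      rw [mem_mkA]
      simp only [mkAddr_val, Prod.mk.injEq, clusterAt, Set.mem_ofPred_eq]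
      refine and_congr_right ?_
      rintro rfl
      simp [hs, eq_inv_mul_iff_mul_eq]
    · apply prod_mkA
      · intro a hh
        obtain ⟨j, h', hj, rfl⟩ := exists_mk a
        simp only [mkAddr_val, Prod.mk.injEq] at hh
        obtain ⟨rfl, rfl⟩ := hh
        simp [tauVal, hs, tau_pow]
      · intro h1
        simp [tau_pow, hs, h1]
  · have hinf := (htf i).resolve_left hs
    have hinj : ∀ a b : ℕ, a < b →
        σw G H (g i.castSucc) ^ a ≠ σw G H (g i.castSucc) ^ b := by
      intro a b hab heq
      obtain ⟨c, rfl⟩ := Nat.exists_eq_add_of_lt hab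
      rw [add_assoc, pow_add] at heq
      have := hinf _ (left_eq_mul.mp heq)
      omega
    refine ⟨(List.range (ν i)).flatMap fun y => mkA g i.castSucc
      ((σw G H (g i.castSucc) ^ y)⁻¹ * ((headProd g ν i)⁻¹ * h)), ?_, ?_, ?_⟩
    · rw [List.pairwise_flatMap]
      refine ⟨fun _ _ => pairwise_mkA _ _ _ _, ?_⟩
      refine List.pairwise_lt_range.imp ?_
      intro y z hyz a ha b hb
      obtain ⟨j, p, hj, rfl⟩ := exists_mk a
      obtain ⟨j', q, hj', rfl⟩ := exists_mk b
      rw [mem_mkA] at ha hb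
      simp only [mkAddr_val, Prod.mk.injEq] at ha hb
      obtain ⟨rfl, rfl⟩ := ha
      obtain ⟨rfl, rfl⟩ := hb
      constructor
      · apply hle5
        · rfl
        · simp
        · exact hs
        · refine ⟨z - y, ?_⟩
          obtain ⟨c, rfl⟩ := Nat.exists_eq_add_of_le hyz.le
          simp only [Nat.add_sub_cancel_left]
          change (σw G H (g i.castSucc) ^ y)⁻¹ * ((headProd g ν i)⁻¹ * h) =
            σw G H (g i.castSucc) ^ c *
              ((σw G H (g i.castSucc) ^ (y + c))⁻¹ * ((headProd g ν i)⁻¹ * h))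
          rw [add_comm, pow_add]
          group
      · intro he
        have : (σw G H (g i.castSucc) ^ y)⁻¹ * ((headProd g ν i)⁻¹ * h) =
            (σw G H (g i.castSucc) ^ z)⁻¹ * ((headProd g ν i)⁻¹ * h) :=
          congrArg (fun a : Addr g => a.1.2) he
        simp only [mul_left_inj, inv_inj] at this
        exact hinj _ _ hyz this
    · intro a
      obtain ⟨j, h', hj, rfl⟩ := exists_mk a
      simp only [List.mem_flatMap, mem_mkA, List.mem_range, Prod.mk.injEq, mkAddr_val]
      constructor
      · rintro ⟨y, hy, rfl, rfl⟩
        refine ⟨rfl, ?_⟩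
        rw [mem_cluster]
        refine ⟨y, fun _ => hy, ?_⟩
        group
      · rintro ⟨rfl, hh⟩
        rw [mem_cluster] at hh
        obtain ⟨y, hy, rfl⟩ := hh
        refine ⟨y, hy hs, rfl, ?_⟩
        group
    · rw [tau_pow, List.map_flatMap, List.flatMap_def, List.prod_flatten, List.map_map]
      congr 1
      apply List.map_congr_left
      intro y _
      apply prod_mkA
      · intro a hh
        obtain ⟨j, h', hj, rfl⟩ := exists_mk a
        simp only [mkAddr_val, Prod.mk.injEq] at hh
        obtain ⟨rfl, rfl⟩ := hh
        simp [tauVal, hs]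
      · exact id

lemma take_succ_finRange (j : ℕ) (hj : j < k) :
    (List.finRange k).take (j + 1) = (List.finRange k).take j ++ [⟨j, hj⟩] := by
  rw [List.take_succ_eq_append_getElem (by simpa using hj)]
  simp

lemma sig_prefix (g : Fin (k + 1) → ↥(RW G H)) (ν : Fin k → ℕ) (j : ℕ) :
    σw G H (((List.finRange k).take j).map fun i => g i.castSucc ^ ν i).prod
      = headProd g ν j := by
  unfold headProd
  induction (List.finRange k).take j with
  | nil => simp [sig_one]
  | cons a l ih => simp [sig_mul, ih, sig_pow]

lemma prefixes (g : Fin (k + 1) → ↥(RW G H))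
    (htf : ∀ i : Fin k, σw G H (g i.castSucc) = 1 ∨
        ∀ n : ℕ, σw G H (g i.castSucc) ^ n = 1 → n = 0)
    (le : Addr g → Addr g → Prop) (hle : GoodOrder g le)
    (ν : Fin k → ℕ) (h : H) (j : ℕ) (hj : j ≤ k) :
    ∃ l : List (Addr g), l.Pairwise (fun a b => le a b ∧ a ≠ b) ∧
      (∀ a, a ∈ l ↔ (a.1.1 : ℕ) < j ∧ a ∈ clusterAt g ν h) ∧
      (l.map fun a => tauVal g a ν).prod =
        τw G H (((List.finRange k).take j).map fun i => g i.castSucc ^ ν i).prod h := by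
  induction j with
  | zero => exact ⟨[], by simp, by simp, by simp [tau_one]⟩
  | succ j ih =>
    obtain ⟨l, hl1, hl2, hl3⟩ := ih (by omega)
    obtain ⟨m, hm1, hm2, hm3⟩ := block g htf le hle ν h ⟨j, hj⟩
    refine ⟨l ++ m, ?_, ?_, ?_⟩
    · rw [List.pairwise_append]
      refine ⟨hl1, hm1, fun a ha b hb => ?_⟩
      have h1 := ((hl2 a).1 ha).1
      have h2 := ((hm2 b).1 hb).1
      have hlt : a.1.1 < b.1.1 := by
        rw [h2, Fin.lt_def]; exact h1
      exact ⟨hle.2.2.2.1 a b hlt, fun he => by rw [he] at hlt; exact lt_irrefl _ hlt⟩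
    · intro a
      rw [List.mem_append, hl2, hm2, ← or_and_right, Fin.ext_iff]
      simp only [Fin.val_castSucc]
      rw [Nat.lt_succ_iff_lt_or_eq]
    · rw [List.map_append, List.prod_append, hl3, hm3, take_succ_finRange j hj,
        List.map_append, List.prod_append, tau_mul, sig_prefix]
      simp

end Aux

end WreathPaper

open WreathPaper Function in
/-- For a fixed torsion-free knapsack expression `E = g₁^{x₁} ⋯ g_k^{x_k} g_{k+1}`
over `G ≀ H` with variable partition `V_E = S ⊎ M` and a fixed admissible linear
order on the addresses: for every valuation `ν = μ ⊕ κ` (`μ ∈ ℕ^M`, `κ ∈ ℕ^S`)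
and every `h ∈ H`, with `C = A_{μ,h}`, we have `τ(ν(E))(h) = κ(E_C)`. -/
theorem statement9 {G H : Type*} [Group G] [Group H] (k : ℕ)
    (g : Fin (k + 1) → ↥(RW G H))
    (htf : ∀ i : Fin k, σw G H (g i.castSucc) = 1 ∨
        ∀ n : ℕ, σw G H (g i.castSucc) ^ n = 1 → n = 0)
    (le : Addr g → Addr g → Prop) (hle : GoodOrder g le)
    (ν : Fin k → ℕ) (h : H) :
    prodOver g le (clusterAt g ν h) ν (τw G H (evalE g ν) h) := by
  obtain ⟨l, hl1, hl2, hl3⟩ := prefixes g htf le hle ν h k le_rfl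
  have key : (l ++ mkA g (Fin.last k) ((headProd g ν k)⁻¹ * h)).Pairwise
      (fun a b => le a b ∧ a ≠ b) := by
    rw [List.pairwise_append]
    refine ⟨hl1, pairwise_mkA _ _ _ _, fun a ha b hb => ?_⟩
    have h1 := ((hl2 a).1 ha).1
    have h2 := (mem_mkA _ _ _ _).1 hb
    have hlt : a.1.1 < b.1.1 := by
      rw [h2, Fin.lt_def]; exact h1
    exact ⟨hle.2.2.2.1 a b hlt, fun he => by rw [he] at hlt; exact lt_irrefl _ hlt⟩
  refine ⟨_, key.imp (fun h => h.2), ?_, key.imp (fun h => h.1), ?_⟩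
  · intro a
    obtain ⟨j, h', hj, rfl⟩ := exists_mk a
    rw [List.mem_append, hl2, mem_mkA]
    by_cases hjk : (j : ℕ) < k
    · have : j ≠ Fin.last k := by
        rintro rfl
        simp at hjk
      simp [hjk, this]
    · have : j = Fin.last k := by
        apply Fin.ext
        have := j.is_lt
        simp only [Fin.val_last]
        omega
      subst this
      simp [clusterAt, eq_inv_mul_iff_mul_eq]
  · rw [List.map_append, List.prod_append, hl3, evalE, tau_mul]
    have h0 := sig_prefix g ν k
    have h1 : (List.finRange k).take k = List.finRange k := by
      rw [List.take_of_length_le (by simp)]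
    rw [h1] at h0 ⊢
    rw [h0]
    congr 1
    apply prod_mkA
    · intro a hh
      obtain ⟨j, h', hj, rfl⟩ := exists_mk a
      simp only [mkAddr_val, Prod.mk.injEq] at hh
      obtain ⟨rfl, rfl⟩ := hh
      simp [tauVal]
    · exact id
end

section
/- In the setting of a fixed torsion-free knapsack expression E = g₁^{x₁}⋯g_k^{x_k}g_{k+1} over G ≀ H: assume that for every knapsack expression F over H the solution set Sol(F) is semilinear. Then for every profile P ⊆ 𝒫(A), the set L_P = {μ ∈ ℕ^M : every μ-cluster belongs to P} is a semilinear subset of ℕ^M. -/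
namespace WreathPaper

/-- A subset of `ℕ^ι` is linear if it equals
`{v₀ + λ₁·v₁ + ⋯ + λ_n·v_n : λ₁, …, λ_n ∈ ℕ}` for some `v₀, …, v_n ∈ ℕ^ι`. -/
def LinearSet {ι : Type*} (A : Set (ι → ℕ)) : Prop :=
  ∃ (n : ℕ) (v0 : ι → ℕ) (v : Fin n → ι → ℕ),
    A = {u | ∃ lam : Fin n → ℕ, u = v0 + ∑ j, lam j • v j}

/-- A subset of `ℕ^ι` is semilinear if it is a finite union of linear sets. -/
def SemilinearSet {ι : Type*} (A : Set (ι → ℕ)) : Prop :=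
  ∃ (m : ℕ) (B : Fin m → Set (ι → ℕ)), (∀ i, LinearSet (B i)) ∧ A = ⋃ i, B i

end WreathPaper

namespace WreathPaper

lemma linearSet_iff {ι : Type*} (A : Set (ι → ℕ)) : LinearSet A ↔ IsLinearSet A := by
  rw [Nat.isLinearSet_iff_exists_matrix]
  constructor
  · rintro ⟨n, v0, v, rfl⟩
    refine ⟨v0, n, fun i j => v j i, ?_⟩
    ext u
    simp only [Set.mem_setOf_eq]
    refine exists_congr fun lam => ?_
    have : v0 + ∑ j, lam j • v j = v0 + Matrix.mulVec (fun i j => v j i) lam := by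
      ext i
      simp [Matrix.mulVec, dotProduct, mul_comm]
    rw [this, eq_comm]
  · rintro ⟨v0, n, A, rfl⟩
    refine ⟨n, v0, fun j i => A i j, ?_⟩
    ext u
    simp only [Set.mem_setOf_eq]
    refine exists_congr fun lam => ?_
    have : v0 + ∑ j, lam j • (fun i => A i j) = v0 + Matrix.mulVec A lam := by
      ext i
      simp [Matrix.mulVec, dotProduct, mul_comm]
    rw [this, eq_comm]

lemma semilinearSet_iff {ι : Type*} (A : Set (ι → ℕ)) :
    SemilinearSet A ↔ IsSemilinearSet A := by
  constructor
  · rintro ⟨m, B, hB, rfl⟩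
    exact IsSemilinearSet.iUnion fun i => ((linearSet_iff _).1 (hB i)).isSemilinearSet
  · rintro ⟨S, hS, hS', rfl⟩
    obtain ⟨m, B, hB⟩ := hS.fin_param
    refine ⟨m, B, fun i => (linearSet_iff _).2 (hS' _ ?_), ?_⟩
    · rw [← hB.2]; exact ⟨i, rfl⟩
    · rw [← hB.2, Set.sUnion_range]

/-- `f : ℕ^ι → H` is given by a knapsack-like expression (repeated variables allowed). -/
def Expressible {ι H : Type*} [Group H] (f : (ι → ℕ) → H) : Prop :=
  ∃ l : List (H × ι × H), ∀ ν, f ν = (l.map fun e => e.1 ^ ν e.2.1 * e.2.2).prod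

section Expr

variable {ι H : Type*} [Group H]

lemma Expressible.const [Nonempty ι] (c : H) : Expressible (fun _ : ι → ℕ => c) :=
  ⟨[(1, Classical.arbitrary ι, c)], by simp⟩

lemma Expressible.pow (a : H) (v : ι) : Expressible (fun ν : ι → ℕ => a ^ ν v) :=
  ⟨[(a, v, 1)], by simp⟩

lemma Expressible.mul {f g : (ι → ℕ) → H} (hf : Expressible f) (hg : Expressible g) :
    Expressible (fun ν => f ν * g ν) := by
  obtain ⟨l, hl⟩ := hf
  obtain ⟨l', hl'⟩ := hg
  exact ⟨l ++ l', fun ν => by simp [hl, hl']⟩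

lemma Expressible.listProd [Nonempty ι] {α : Type*} (l : List α) (f : α → (ι → ℕ) → H)
    (hf : ∀ a, Expressible (f a)) : Expressible (fun ν => (l.map fun a => f a ν).prod) := by
  induction l with
  | nil => simpa using Expressible.const (1 : H)
  | cons a l ih => simpa using (hf a).mul ih

lemma Expressible.inv [Nonempty ι] {f : (ι → ℕ) → H} (hf : Expressible f) :
    Expressible (fun ν => (f ν)⁻¹) := by
  obtain ⟨l, hl⟩ := hf
  obtain rfl : f = _ := funext hl
  clear hl
  induction l with
  | nil => simpa using Expressible.const (1 : H)
  | cons e l ih =>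
    have := ih.mul ((Expressible.const e.2.2⁻¹).mul (Expressible.pow e.1⁻¹ e.2.1))
    simpa [mul_assoc] using this

lemma Expressible.semilinear [Finite ι] [Nonempty ι]
    (hH : ∀ (d : ℕ) (h0 : H) (a b : Fin d → H),
        SemilinearSet {ν : Fin d → ℕ |
          h0 * ((List.finRange d).map fun i => a i ^ ν i * b i).prod = 1})
    {f g : (ι → ℕ) → H} (hf : Expressible f) (hg : Expressible g) :
    IsSemilinearSet {ν | f ν = g ν} := by
  obtain ⟨l, hl⟩ := hf.mul hg.inv
  have h1 := (semilinearSet_iff _).1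
    (hH l.length 1 (fun i => (l.get i).1) (fun i => (l.get i).2.2))
  have h2 := h1.preimage (LinearMap.funLeft ℕ ℕ (fun i : Fin l.length => (l.get i).2.1))
  convert h2 using 1
  ext ν
  simp only [Set.mem_setOf_eq, Set.mem_preimage, LinearMap.funLeft_apply, one_mul]
  rw [← mul_inv_eq_one, show f ν * (g ν)⁻¹ = _ from hl ν]
  have : l.map (fun e => e.1 ^ ν e.2.1 * e.2.2) = (List.finRange l.length).map
      (fun i => (l.get i).1 ^ ν (l.get i).2.1 * (l.get i).2.2) := by
    conv_lhs => rw [← List.map_get_finRange l]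
    rw [List.map_map]
    rfl
  rw [this]

end Expr

section Main

variable {G H : Type*} [Group G] [Group H] {k : ℕ}

instance addrFinite (g : Fin (k + 1) → ↥(RW G H)) : Finite (Addr g) := by
  have : {p : Fin (k + 1) × H | p.2 ∈ Function.mulSupport (τw G H (g p.1))}.Finite := by
    have h : {p : Fin (k + 1) × H | p.2 ∈ Function.mulSupport (τw G H (g p.1))} =
        ⋃ i, (fun h => (i, h)) '' Function.mulSupport (τw G H (g i)) := by
      ext ⟨i, h⟩
      simp
    rw [h]
    exact Set.finite_iUnion fun i => Set.Finite.image _ (g i).2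
  exact this.to_subtype

/-- the bound on the `y` variable of an address -/
def okAt (g : Fin (k + 1) → ↥(RW G H)) (a : Addr g) (ν : Fin k → ℕ) (y : ℕ) : Prop :=
  ∀ hlt : (a.1.1 : ℕ) < k, σw G H (g a.1.1) ≠ 1 → y < ν ⟨a.1.1, hlt⟩

open Classical in
/-- the value of `σ(a)` -/
noncomputable def valAt (g : Fin (k + 1) → ↥(RW G H)) (a : Addr g) (ν : Fin k → ℕ) (y : ℕ) : H :=
  headProd g ν a.1.1 * (if (a.1.1 : ℕ) < k then σw G H (g a.1.1) else 1) ^ y * a.1.2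

lemma mem_clusterAt (g : Fin (k + 1) → ↥(RW G H)) (a : Addr g) (ν : Fin k → ℕ) (h : H) :
    a ∈ clusterAt g ν h ↔ ∃ y, okAt g a ν y ∧ valAt g a ν y = h := by
  unfold clusterAt okAt valAt
  rw [Set.mem_setOf_eq]
  by_cases hlt : (a.1.1 : ℕ) < k
  · simp [hlt]
  · have : (a.1.1 : ℕ) = k := by have := a.1.1.2; omega
    simp [this]

lemma expressible_valAt {ι : Type*} (g : Fin (k + 1) → ↥(RW G H)) (a : Addr g)
    (p : Fin k → ι) (q : ι) :
    Expressible (fun w : ι → ℕ => valAt g a (fun i => w (p i)) (w q)) := by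
  have : Nonempty ι := ⟨q⟩
  unfold valAt headProd
  exact ((Expressible.listProd _ _ fun i => Expressible.pow _ _).mul
    (Expressible.pow _ _)).mul (Expressible.const _)

lemma semilinear_lt {ι : Type*} [Finite ι] (p q : ι) :
    IsSemilinearSet {w : ι → ℕ | w p < w q} := by
  have h := isSemilinearSet_setOfPred_eq (M := (ι ⊕ Unit → ℕ)) (N := ℕ) 1 0
    (LinearMap.proj (R := ℕ) (φ := fun _ : ι ⊕ Unit => ℕ) (Sum.inl p)
      + LinearMap.proj (R := ℕ) (φ := fun _ : ι ⊕ Unit => ℕ) (Sum.inr ()))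
    (LinearMap.proj (R := ℕ) (φ := fun _ : ι ⊕ Unit => ℕ) (Sum.inl q))
  have h2 := IsSemilinearSet.proj h
  convert h2 using 1
  ext w
  simp only [Set.mem_setOf_eq, LinearMap.add_apply, LinearMap.proj_apply, Sum.elim_inl,
    Sum.elim_inr]
  constructor
  · intro hw
    exact ⟨fun _ => w q - w p - 1, by
      show 1 + (w p + (w q - w p - 1)) = 0 + w q
      omega⟩
  · rintro ⟨y, hy⟩
    omega

lemma semilinear_ok {ι : Type*} [Finite ι] (g : Fin (k + 1) → ↥(RW G H)) (a : Addr g)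
    (p : Fin k → ι) (q : ι) :
    IsSemilinearSet {w : ι → ℕ | okAt g a (fun i => w (p i)) (w q)} := by
  unfold okAt
  by_cases h : ∃ hlt : (a.1.1 : ℕ) < k, σw G H (g a.1.1) ≠ 1
  · obtain ⟨hlt, h1⟩ := h
    convert semilinear_lt q (p ⟨a.1.1, hlt⟩) using 1
    ext w
    simp [hlt, h1]
  · convert IsSemilinearSet.univ (M := ι → ℕ) using 1
    ext w
    simp only [Set.mem_setOf_eq, Set.mem_univ, iff_true]
    intro h1 h2
    exact absurd ⟨h1, h2⟩ h

lemma semilinear_full (g : Fin (k + 1) → ↥(RW G H))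
    (hH : ∀ (d : ℕ) (h0 : H) (a b : Fin d → H),
        SemilinearSet {ν : Fin d → ℕ |
          h0 * ((List.finRange d).map fun i => a i ^ ν i * b i).prod = 1})
    (P : Set (Set (Addr g))) :
    IsSemilinearSet {ν : Fin k → ℕ |
      ∀ h : H, (clusterAt g ν h).Nonempty → clusterAt g ν h ∈ P} := by
  classical
  -- membership of `b` in the cluster of the value of `a`
  have hQ : ∀ a b : Addr g, IsSemilinearSet {w : Fin k ⊕ Unit → ℕ |
      b ∈ clusterAt g (fun i => w (Sum.inl i))
        (valAt g a (fun i => w (Sum.inl i)) (w (Sum.inr ())))} := by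
    intro a b
    have h1 := (semilinear_ok g b (fun i => (Sum.inl (Sum.inl i) : (Fin k ⊕ Unit) ⊕ Unit))
      (Sum.inr ())).inter (Expressible.semilinear hH
        (expressible_valAt g b (fun i => (Sum.inl (Sum.inl i) : (Fin k ⊕ Unit) ⊕ Unit))
          (Sum.inr ()))
        (expressible_valAt g a (fun i => (Sum.inl (Sum.inl i) : (Fin k ⊕ Unit) ⊕ Unit))
          (Sum.inl (Sum.inr ()))))
    convert h1.proj using 1
    ext w
    simp only [Set.mem_setOf_eq, mem_clusterAt, Set.mem_inter_iff, Sum.elim_inl, Sum.elim_inr]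
    exact ⟨fun ⟨y, hy⟩ => ⟨fun _ => y, hy⟩, fun ⟨y, hy⟩ => ⟨y (), hy⟩⟩
  have hR : ∀ (a : Addr g) (C : Set (Addr g)), IsSemilinearSet {w : Fin k ⊕ Unit → ℕ |
      clusterAt g (fun i => w (Sum.inl i))
        (valAt g a (fun i => w (Sum.inl i)) (w (Sum.inr ()))) = C} := by
    intro a C
    have : ∀ b : Addr g, IsSemilinearSet {w : Fin k ⊕ Unit → ℕ |
      b ∈ clusterAt g (fun i => w (Sum.inl i))
        (valAt g a (fun i => w (Sum.inl i)) (w (Sum.inr ()))) ↔ b ∈ C} := by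
      intro b
      by_cases hb : b ∈ C
      · simpa [hb] using hQ a b
      · simp only [hb, iff_false]
        exact (hQ a b).compl
    convert IsSemilinearSet.iInter this using 1
    ext w
    simp [Set.ext_iff]
  have hT : ∀ (a : Addr g) (C : Set (Addr g)), IsSemilinearSet {ν : Fin k → ℕ |
      ∃ y, okAt g a ν y ∧ clusterAt g ν (valAt g a ν y) = C} := by
    intro a C
    have h1 := (semilinear_ok g a (fun i => (Sum.inl i : Fin k ⊕ Unit))
      (Sum.inr ())).inter (hR a C)
    convert h1.proj using 1
    ext w
    simp only [Set.mem_setOf_eq, Set.mem_inter_iff, Sum.elim_inl, Sum.elim_inr]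
    exact ⟨fun ⟨y, hy⟩ => ⟨fun _ => y, hy⟩, fun ⟨y, hy⟩ => ⟨y (), hy⟩⟩
  have hU := (IsSemilinearSet.iUnion fun a : Addr g =>
    IsSemilinearSet.biUnion (Set.toFinite Pᶜ) fun C _ => hT a C).compl
  convert hU using 1
  ext ν
  simp only [Set.mem_setOf_eq, Set.mem_compl_iff, Set.mem_iUnion, not_exists]
  constructor
  · rintro h a C hC y ⟨hy, rfl⟩
    exact hC (h _ ⟨a, (mem_clusterAt g a ν _).2 ⟨y, hy, rfl⟩⟩)
  · rintro h x ⟨a, ha⟩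
    obtain ⟨y, hy, rfl⟩ := (mem_clusterAt g a ν _).1 ha
    by_contra hC
    exact h a _ hC y ⟨hy, rfl⟩

end Main

end WreathPaper

open WreathPaper Function Classical in
/-- For a fixed torsion-free knapsack expression `E = g₁^{x₁} ⋯ g_k^{x_k} g_{k+1}`
over `G ≀ H`: if every knapsack expression over `H` has a semilinear solution
set, then for every profile `P ⊆ 𝒫(A)` the set
`L_P = {μ ∈ ℕ^M : every μ-cluster belongs to P}` is semilinear (here
`M = {xᵢ : σ(gᵢ) ≠ 1}`, and a `μ`-cluster is a nonempty set `A_{μ,h}`, computed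
from the extension of `μ ∈ ℕ^M` to all variables, the components outside `M`
being irrelevant). -/
theorem statement11 {G H : Type*} [Group G] [Group H] (k : ℕ)
    (g : Fin (k + 1) → ↥(RW G H))
    (htf : ∀ i : Fin k, σw G H (g i.castSucc) = 1 ∨
        ∀ n : ℕ, σw G H (g i.castSucc) ^ n = 1 → n = 0)
    (hH : ∀ (d : ℕ) (h0 : H) (a b : Fin d → H),
        SemilinearSet {ν : Fin d → ℕ |
          h0 * ((List.finRange d).map fun i => a i ^ ν i * b i).prod = 1})
    (P : Set (Set (Addr g))) :
    SemilinearSet {μ : {i : Fin k // σw G H (g i.castSucc) ≠ 1} → ℕ |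
      ∀ h : H,
        (clusterAt g
          (fun i => if hi : σw G H (g i.castSucc) ≠ 1 then μ ⟨i, hi⟩ else 0)
          h).Nonempty →
        clusterAt g
          (fun i => if hi : σw G H (g i.castSucc) ≠ 1 then μ ⟨i, hi⟩ else 0)
          h ∈ P} := by
  rw [semilinearSet_iff]
  have h := (semilinear_full g hH P).preimage
    (M := {i : Fin k // σw G H (g i.castSucc) ≠ 1} → ℕ)
    (AddMonoidHom.mk ⟨(fun μ => fun i : Fin k =>
      if hi : σw G H (g i.castSucc) ≠ 1 then μ ⟨i, hi⟩ else 0), by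
        funext i
        simp⟩ (by
        intro a b
        funext i
        by_cases hi : σw G H (g i.castSucc) = 1 <;> simp [hi]) :
      ({i : Fin k // σw G H (g i.castSucc) ≠ 1} → ℕ) →+ (Fin k → ℕ))
  exact h
end

section
/- Let G and H be groups. Every knapsack expression over the wreath product G ≀ H has a semilinear solution set if and only if every knapsack expression over G has a semilinear solution set and every knapsack expression over H has a semilinear solution set. (This is the non-effective content of the theorem that the class of knapsack-semilinear groups is closed under wreath products.) -/
namespace WreathPaper

/-- A group `L` is knapsack-semilinear (in the non-effective sense) if for
every knapsack expression `E = h₀ g₁^{x₁} h₁ ⋯ g_k^{x_k} h_k` over `L` (with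
pairwise distinct variables `x₁, …, x_k`), the solution set
`Sol(E) = {ν ∈ ℕ^k : h₀ g₁^{ν(x₁)} h₁ ⋯ g_k^{ν(x_k)} h_k = 1}` is
semilinear. -/
def KnapsackSemilinear (L : Type*) [Group L] : Prop :=
  ∀ (k : ℕ) (h0 : L) (g h : Fin k → L),
    SemilinearSet {ν : Fin k → ℕ |
      h0 * ((List.finRange k).map fun i => g i ^ ν i * h i).prod = 1}

end WreathPaper

namespace WProof

set_option linter.unusedSectionVars false

open WreathPaper Function

/-- A predicate on a commutative monoid is semilinear. -/
def Sem {M : Type} [AddCommMonoid M] (p : M → Prop) : Prop := IsSemilinearSet {x | p x}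

/-- A function with semilinear graph. -/
def DF {M N : Type} [AddCommMonoid M] [AddCommMonoid N] (φ : M → N) : Prop :=
  Sem fun z : M × N => z.2 = φ z.1

instance fgNat : AddMonoid.FG ℕ := inferInstance

instance fgProd {M N : Type} [AddCommMonoid M] [AddCommMonoid N] [AddMonoid.FG M]
    [AddMonoid.FG N] : AddMonoid.FG (M × N) := inferInstance

section sem
variable {M N P : Type} [AddCommMonoid M] [AddCommMonoid N] [AddCommMonoid P]
  [AddMonoid.FG M] [AddMonoid.FG N] [AddMonoid.FG P]

lemma Sem.congr {p q : M → Prop} (h : Sem p) (hpq : ∀ x, q x ↔ p x) : Sem q := by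
  have : q = p := funext fun x => propext (hpq x)
  rwa [this]

lemma Sem.and {p q : M → Prop} (hp : Sem p) (hq : Sem q) : Sem fun x => p x ∧ q x :=
  IsSemilinearSet.inter hp hq

lemma Sem.or {p q : M → Prop} (hp : Sem p) (hq : Sem q) : Sem fun x => p x ∨ q x :=
  IsSemilinearSet.union hp hq

lemma Sem.not {p : M → Prop} (hp : Sem p) : Sem fun x => ¬ p x :=
  IsSemilinearSet.compl hp

lemma Sem.all {κ : Type*} [Finite κ] {p : κ → M → Prop} (hp : ∀ k, Sem (p k)) :
    Sem fun x => ∀ k, p k x := by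
  have := IsSemilinearSet.iInter hp
  refine Sem.congr (p := fun x => x ∈ ⋂ i, {x | p i x}) this ?_
  simp

lemma Sem.ex {κ : Type*} [Finite κ] {p : κ → M → Prop} (hp : ∀ k, Sem (p k)) :
    Sem fun x => ∃ k, p k x := by
  have := IsSemilinearSet.iUnion hp
  refine Sem.congr (p := fun x => x ∈ ⋃ i, {x | p i x}) this ?_
  simp

lemma Sem.preimage {p : N → Prop} (hp : Sem p) (f : M →+ N) : Sem fun x => p (f x) :=
  IsSemilinearSet.preimage hp f

lemma Sem.exists {p : M × N → Prop} (hp : Sem p) : Sem fun x => ∃ y, p (x, y) := by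
  have := IsSemilinearSet.image hp (AddMonoidHom.fst M N)
  refine Sem.congr (p := fun x => x ∈ (AddMonoidHom.fst M N) '' {x | p x}) this ?_
  simp

lemma Sem.forall {p : M × N → Prop} (hp : Sem p) : Sem fun x => ∀ y, p (x, y) := by
  refine (hp.not.exists).not.congr ?_
  simp

lemma Sem.homEq (a b : N) (f g : M →+ N) : Sem fun x => a + f x = b + g x :=
  isSemilinearSet_setOfPred_eq a b f g

lemma Sem.true : Sem fun _ : M => True :=
  (Sem.homEq (0 : ℕ) 0 (0 : M →+ ℕ) 0).congr (by simp)

lemma DF.congr {f g : M → N} (h : DF f) (hpq : ∀ x, g x = f x) : DF g := by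
  have : g = f := funext hpq
  rwa [this]

lemma DF.hom (f : M →+ N) : DF fun x => f x :=
  (Sem.homEq 0 0 (AddMonoidHom.snd M N) (f.comp (AddMonoidHom.fst M N))).congr (by simp)

lemma DF.const (c : N) : DF fun _ : M => c :=
  (Sem.homEq 0 c (AddMonoidHom.snd M N) 0).congr (by simp)

lemma DF.fst : DF fun x : M × N => x.1 := DF.hom (AddMonoidHom.fst M N)
lemma DF.snd : DF fun x : M × N => x.2 := DF.hom (AddMonoidHom.snd M N)

lemma Sem.comp {p : N → Prop} (hp : Sem p) {φ : M → N} (hφ : DF φ) : Sem fun x => p (φ x) := by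
  have h2 : Sem fun z : M × N => p z.2 := hp.preimage (AddMonoidHom.snd M N)
  refine (Sem.and hφ h2).exists.congr ?_
  simp

lemma DF.pair {φ : M → N} {ψ : M → P} (hφ : DF φ) (hψ : DF ψ) : DF fun x => (φ x, ψ x) := by
  have h1 := Sem.preimage (M := M × (N × P)) hφ ((AddMonoidHom.fst M (N × P)).prod
    ((AddMonoidHom.fst N P).comp (AddMonoidHom.snd M (N × P))))
  have h2 := Sem.preimage (M := M × (N × P)) hψ ((AddMonoidHom.fst M (N × P)).prod
    ((AddMonoidHom.snd N P).comp (AddMonoidHom.snd M (N × P))))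
  refine (h1.and h2).congr ?_
  simp [Prod.ext_iff]

lemma DF.comp {ψ : N → P} {φ : M → N} (hψ : DF ψ) (hφ : DF φ) : DF fun x => ψ (φ x) := by
  have h1 : DF fun x : M × P => φ x.1 := by
    have h1 := Sem.preimage (M := (M × P) × N) hφ
      (((AddMonoidHom.fst M P).comp (AddMonoidHom.fst (M × P) N)).prod
        (AddMonoidHom.snd (M × P) N))
    exact h1
  exact Sem.comp hψ (h1.pair DF.snd)

lemma DF.pi {k : ℕ} {φ : Fin k → M → ℕ} (hφ : ∀ i, DF (φ i)) :
    DF fun x => fun i => φ i x := by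
  have h1 : ∀ i, Sem fun z : M × (Fin k → ℕ) => z.2 i = φ i z.1 := fun i =>
    Sem.preimage (M := M × (Fin k → ℕ)) (hφ i) ((AddMonoidHom.fst M (Fin k → ℕ)).prod
    ((Pi.evalAddMonoidHom (fun _ : Fin k => ℕ) i).comp (AddMonoidHom.snd M (Fin k → ℕ))))
  refine (Sem.all h1).congr ?_
  simp [funext_iff]

lemma Sem.eq {φ ψ : M → N} (hφ : DF φ) (hψ : DF ψ) : Sem fun x => φ x = ψ x := by
  have : Sem fun z : N × N => z.1 = z.2 :=
    (Sem.homEq 0 0 (AddMonoidHom.fst N N) (AddMonoidHom.snd N N)).congr (by simp)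
  exact this.comp (hφ.pair hψ)

lemma DF.add {φ ψ : M → ℕ} (hφ : DF φ) (hψ : DF ψ) : DF fun x => φ x + ψ x := by
  have := DF.hom (AddMonoidHom.fst ℕ ℕ + AddMonoidHom.snd ℕ ℕ)
  exact DF.comp this (hφ.pair hψ)

lemma DF.cmul (m : ℕ) {φ : M → ℕ} (hφ : DF φ) : DF fun x => m * φ x := by
  have := DF.hom (AddMonoidHom.mulLeft m)
  exact DF.comp this hφ

lemma Sem.le {φ ψ : M → ℕ} (hφ : DF φ) (hψ : DF ψ) : Sem fun x => φ x ≤ ψ x := by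
  have h : Sem fun z : M × ℕ => ψ z.1 = φ z.1 + z.2 :=
    Sem.eq (hψ.comp DF.fst) ((hφ.comp DF.fst).add DF.snd)
  exact h.exists.congr fun x => by simp [le_iff_exists_add]

lemma Sem.lt {φ ψ : M → ℕ} (hφ : DF φ) (hψ : DF ψ) : Sem fun x => φ x < ψ x :=
  Sem.le (hφ.add (DF.const 1)) hψ

lemma DF.sub {φ ψ : M → ℕ} (hφ : DF φ) (hψ : DF ψ) : DF fun x => φ x - ψ x := by
  have h1 : DF fun z : M × ℕ => φ z.1 := hφ.comp DF.fst
  have h2 : DF fun z : M × ℕ => ψ z.1 := hψ.comp DF.fst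
  refine ((Sem.eq h1 (DF.snd.add h2)).or
    ((Sem.lt h1 h2).and (Sem.eq DF.snd (DF.const 0)))).congr ?_
  intro z
  dsimp only
  omega

lemma DF.div (m : ℕ) (hm : 0 < m) {φ : M → ℕ} (hφ : DF φ) : DF fun x => φ x / m := by
  have h1 : DF fun z : M × ℕ => φ z.1 := hφ.comp DF.fst
  refine ((Sem.le (DF.cmul m DF.snd) h1).and
    (Sem.lt h1 ((DF.cmul m DF.snd).add (DF.const m)))).congr ?_
  intro z
  dsimp only
  rw [eq_comm, Nat.div_eq_iff hm]
  constructor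
  · rintro ⟨h, h'⟩
    have := mul_comm z.2 m
    constructor <;> omega
  · rintro ⟨h, h'⟩
    refine ⟨by nlinarith, ?_⟩
    have := mul_comm z.2 m
    omega

lemma DF.mod (m : ℕ) (hm : 0 < m) {φ : M → ℕ} (hφ : DF φ) : DF fun x => φ x % m :=
  (hφ.sub (DF.cmul m (hφ.div m hm))).congr fun x => by
    have := Nat.div_add_mod (φ x) m
    omega

end sem

lemma semilinearSet_of_sem {k : ℕ} {A : Set (Fin k → ℕ)} (h : IsSemilinearSet A) :
    SemilinearSet A := by
  obtain ⟨S, hS, hS', rfl⟩ := h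
  have := hS.to_subtype
  obtain ⟨m, ⟨e⟩⟩ := Finite.exists_equiv_fin S
  refine ⟨m, fun i => (e.symm i).1, fun i => ?_, ?_⟩
  · obtain ⟨a, n, f, hf⟩ := isLinearSet_iff_exists_fin_addMonoidHom.1 (hS' _ (e.symm i).2)
    refine ⟨n, a, fun j => f (Pi.single j 1), ?_⟩
    dsimp only
    rw [hf]
    have key : ∀ l : Fin n → ℕ, f l = ∑ j, l j • f (Pi.single j 1) := by
      intro l
      conv_lhs => rw [pi_eq_sum_univ' l]
      simp only [map_sum, map_nsmul]
    ext u
    simp only [Set.mem_vadd_set, Set.mem_range, exists_exists_eq_and, vadd_eq_add, Set.mem_ofPred_eq]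
    exact ⟨fun ⟨l, hl⟩ => ⟨l, by rw [← key, hl]⟩, fun ⟨l, hl⟩ => ⟨l, by rw [key, hl]⟩⟩
  · rw [Set.sUnion_eq_iUnion]
    exact (e.symm.surjective.iUnion_comp fun t : S => t.1).symm

lemma sem_of_semilinearSet {k : ℕ} {A : Set (Fin k → ℕ)} (h : SemilinearSet A) :
    IsSemilinearSet A := by
  obtain ⟨m, B, hB, rfl⟩ := h
  refine IsSemilinearSet.iUnion fun i => IsLinearSet.isSemilinearSet ?_
  obtain ⟨n, v0, v, hv⟩ := hB i
  rw [hv, isLinearSet_iff_exists_fin_addMonoidHom]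
  refine ⟨v0, n, ∑ j, (AddMonoidHom.flip (AddMonoidHom.smul : ℕ →+ (Fin k → ℕ) →+ _) (v j)).comp
    (Pi.evalAddMonoidHom (fun _ : Fin n => ℕ) j), ?_⟩
  ext u
  simp only [Set.mem_vadd_set, Set.mem_range, exists_exists_eq_and, vadd_eq_add, Set.mem_ofPred_eq,
    AddMonoidHom.finsetSum_apply]
  exact ⟨fun ⟨l, hl⟩ => ⟨l, hl.symm⟩, fun ⟨l, hl⟩ => ⟨l, hl.symm⟩⟩

section good
universe u v
variable {M N : Type} [AddCommMonoid M] [AddCommMonoid N] [AddMonoid.FG M] [AddMonoid.FG N]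
variable {G : Type u} {H : Type v} [Group G] [Group H]

/-- Evaluation of an exponent expression. -/
def ev (w : List (G × (M → ℕ))) (x : M) : G := (w.map fun p => p.1 ^ p.2 x).prod

/-- A function which is, on finitely many semilinear pieces, given by an exponent expression. -/
def Good (F : M → G) : Prop :=
  ∃ (κ : Type) (_ : Finite κ) (S : κ → M → Prop) (w : κ → List (G × (M → ℕ))),
    (∀ k, Sem (S k)) ∧ (∀ k, ∀ p ∈ w k, DF p.2) ∧ (∀ x, ∃ k, S k x) ∧
      ∀ k x, S k x → F x = ev (w k) x

lemma Good.congr {F F' : M → G} (h : Good F) (e : ∀ x, F' x = F x) : Good F' := by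
  have : F' = F := funext e
  rwa [this]

lemma Good.pow (g : G) {e : M → ℕ} (he : DF e) : Good fun x => g ^ e x :=
  ⟨Unit, inferInstance, fun _ _ => True, fun _ => [(g, e)], fun _ => Sem.true,
    by simpa using he, by simp, by simp [ev]⟩

lemma Good.const (g : G) : Good fun _ : M => g :=
  (Good.pow g (DF.const 1)).congr (by simp)

lemma Good.mul {F F' : M → G} (h : Good F) (h' : Good F') : Good fun x => F x * F' x := by
  obtain ⟨κ, hκ, S, w, hS, hw, hc, hF⟩ := h
  obtain ⟨κ', hκ', S', w', hS', hw', hc', hF'⟩ := h'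
  refine ⟨κ × κ', inferInstance, fun k x => S k.1 x ∧ S' k.2 x, fun k => w k.1 ++ w' k.2,
    fun k => (hS _).and (hS' _), ?_, ?_, ?_⟩
  · intro k p hp
    rcases List.mem_append.1 hp with hp | hp
    · exact hw _ _ hp
    · exact hw' _ _ hp
  · intro x
    obtain ⟨k, hk⟩ := hc x
    obtain ⟨k', hk'⟩ := hc' x
    exact ⟨(k, k'), hk, hk'⟩
  · rintro ⟨k, k'⟩ x ⟨h1, h2⟩
    dsimp only at h1 h2 ⊢
    rw [hF _ _ h1, hF' _ _ h2]
    simp [ev]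

lemma Good.inv {F : M → G} (h : Good F) : Good fun x => (F x)⁻¹ := by
  obtain ⟨κ, hκ, S, w, hS, hw, hc, hF⟩ := h
  refine ⟨κ, hκ, S, fun k => ((w k).map fun p => (p.1⁻¹, p.2)).reverse, hS, ?_, hc, ?_⟩
  · intro k p hp
    simp only [List.mem_reverse, List.mem_map] at hp
    obtain ⟨q, hq, rfl⟩ := hp
    exact hw k q hq
  · intro k x hx
    dsimp only
    rw [hF k x hx, ev, ev, List.prod_inv_reverse]
    simp [List.map_reverse, Function.comp_def]

lemma Good.comp {F : N → G} (h : Good F) {φ : M → N} (hφ : DF φ) : Good fun x => F (φ x) := by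
  obtain ⟨κ, hκ, S, w, hS, hw, hc, hF⟩ := h
  refine ⟨κ, hκ, fun k x => S k (φ x), fun k => (w k).map fun p => (p.1, fun x => p.2 (φ x)),
    fun k => (hS k).comp hφ, ?_, fun x => hc _, ?_⟩
  · intro k p hp
    simp only [List.mem_map] at hp
    obtain ⟨q, hq, rfl⟩ := hp
    exact (hw k q hq).comp hφ
  · intro k x hx
    dsimp only
    rw [hF k _ hx]
    simp [ev, Function.comp_def]

lemma Good.cover {κ : Type*} [Finite κ] {F : M → G} (S : κ → M → Prop) (hS : ∀ k, Sem (S k))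
    (hc : ∀ x, ∃ k, S k x) (F' : κ → M → G) (hF' : ∀ k, Good (F' k))
    (h : ∀ k x, S k x → F x = F' k x) : Good F := by
  obtain ⟨n, ⟨e⟩⟩ := Finite.exists_equiv_fin κ
  choose K hK T w hT hw hcT hE using hF'
  refine ⟨Σ i : Fin n, K (e.symm i), inferInstance,
    fun k x => S (e.symm k.1) x ∧ T _ k.2 x, fun k => w _ k.2, fun k => (hS _).and (hT _ _),
    fun k => hw _ _, ?_, ?_⟩
  · intro x
    obtain ⟨k, hk⟩ := hc x
    obtain ⟨i, rfl⟩ := e.symm.surjective k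
    obtain ⟨j, hj⟩ := hcT (e.symm i) x
    exact ⟨⟨i, j⟩, hk, hj⟩
  · rintro ⟨i, j⟩ x ⟨h1, h2⟩
    rw [h _ _ h1]
    exact hE _ _ _ h2

lemma Good.ite {F F₁ F₂ : M → G} {S : M → Prop} (hS : Sem S) (h₁ : Good F₁) (h₂ : Good F₂)
    (e₁ : ∀ x, S x → F x = F₁ x) (e₂ : ∀ x, ¬ S x → F x = F₂ x) : Good F := by
  refine Good.cover (κ := Bool) (fun b x => if b then S x else ¬ S x) ?_ ?_
    (fun b => if b then F₁ else F₂) ?_ ?_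
  · rintro (_ | _)
    · simpa using hS.not
    · simpa using hS
  · intro x
    by_cases h : S x
    · exact ⟨true, by simpa⟩
    · exact ⟨false, by simpa⟩
  · rintro (_ | _)
    · simpa using h₂
    · simpa using h₁
  · rintro (_ | _) x
    · simpa using e₂ x
    · simpa using e₁ x

lemma Good.sem_one (hG : KnapsackSemilinear G) {F : M → G} (h : Good F) :
    Sem fun x => F x = 1 := by
  obtain ⟨κ, hκ, S, w, hS, hw, hc, hF⟩ := h
  have key : ∀ k, Sem fun x => ev (w k) x = 1 := by
    intro k
    have h1 : Sem fun ν : Fin (w k).length → ℕ =>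
        1 * ((List.finRange _).map fun i => ((w k).get i).1 ^ ν i * 1).prod = 1 :=
      sem_of_semilinearSet (hG (w k).length 1 (fun i => ((w k).get i).1) (fun _ => 1))
    have h2 : DF fun x : M => fun i : Fin (w k).length => ((w k).get i).2 x :=
      DF.pi fun i => hw k _ (List.get_mem _ _)
    refine (h1.comp h2).congr fun x => ?_
    have : (List.finRange (w k).length).map
        (fun i => ((w k).get i).1 ^ ((w k).get i).2 x) = (w k).map fun p => p.1 ^ p.2 x := by
      refine List.ext_get (by simp) fun n h1 h2 => ?_
      simp
    simp only [mul_one, one_mul, ev]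
    rw [this]
  refine (Sem.ex fun k => (hS k).and (key k)).congr fun x => ?_
  constructor
  · intro h
    obtain ⟨k, hk⟩ := hc x
    exact ⟨k, hk, by rw [← hF k x hk, h]⟩
  · rintro ⟨k, hk, h⟩
    rw [hF k x hk, h]

lemma Good.sem_eq (hG : KnapsackSemilinear G) {F F' : M → G} (h : Good F) (h' : Good F') :
    Sem fun x => F x = F' x :=
  ((h.mul h'.inv).sem_one hG).congr fun x => by rw [mul_inv_eq_one]

/-- A family of functions indexed by `H`, trivial outside a finite set, evaluated at a good
`H`-valued function. -/
lemma Good.finval (hH : KnapsackSemilinear H) {u : M → H} (hu : Good u) {U : Set H}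
    (hU : U.Finite) (F : H → M → G) (hF : ∀ a ∈ U, Good (F a)) (hF' : ∀ a ∉ U, ∀ x, F a x = 1) :
    Good fun x => F (u x) x := by
  have := hU.to_subtype
  refine Good.cover (κ := Option U)
    (fun o x => match o with
      | none => ∀ a : U, ¬ u x = a.1
      | some a => u x = a.1) ?_ ?_
    (fun o => match o with
      | none => fun _ => 1
      | some a => F a.1) ?_ ?_
  · rintro (_ | a)
    · exact Sem.all fun a => (hu.sem_eq hH (Good.const a.1)).not
    · exact hu.sem_eq hH (Good.const a.1)
  · intro x
    by_cases h : u x ∈ U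
    · exact ⟨some ⟨_, h⟩, rfl⟩
    · exact ⟨none, fun a ha => h (ha ▸ a.2)⟩
  · rintro (_ | a)
    · exact Good.const 1
    · exact hF _ a.2
  · rintro (_ | a) x hx
    · exact hF' _ (fun h => hx ⟨_, h⟩ rfl) x
    · dsimp only at hx ⊢
      rw [hx]

lemma Good.fin (hH : KnapsackSemilinear H) {u : M → H} (hu : Good u) {f : H → G}
    (hf : (mulSupport f).Finite) : Good fun x => f (u x) :=
  Good.finval hH hu hf (fun a _ => f a) (fun _ _ => Good.const _)
    (fun a ha _ => by simpa using ha)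

/-- The ordered product `f(u) f(h⁻¹u) ⋯ f(h^{-(n-1)}u)`. -/
def Pr (f : H → G) (h : H) : ℕ → H → G
  | 0, _ => 1
  | n + 1, u => f u * Pr f h n (h⁻¹ * u)

lemma Pr_add (f : H → G) (h : H) (n m : ℕ) (u : H) :
    Pr f h (n + m) u = Pr f h n u * Pr f h m ((h ^ n)⁻¹ * u) := by
  induction n generalizing u with
  | zero => simp [Pr]
  | succ n ih =>
    rw [show n + 1 + m = (n + m) + 1 by omega, Pr, ih, Pr, pow_succ']
    simp [mul_assoc]

lemma Pr_congr {f f' : H → G} {h : H} {n : ℕ} {u : H}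
    (e : ∀ l < n, f ((h ^ l)⁻¹ * u) = f' ((h ^ l)⁻¹ * u)) : Pr f h n u = Pr f' h n u := by
  induction n generalizing u with
  | zero => rfl
  | succ n ih =>
    rw [Pr, Pr]
    have h0 := e 0 (by omega)
    simp only [pow_zero, inv_one, one_mul] at h0
    rw [h0, ih]
    intro l hl
    have := e (l + 1) (by omega)
    simpa [pow_succ', mul_assoc] using this

lemma Pr_one (h : H) (n : ℕ) (u : H) : Pr (fun _ => (1 : G)) h n u = 1 := by
  induction n generalizing u with
  | zero => rfl
  | succ n ih => simp [Pr, ih]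

lemma Pr_ne_one {f : H → G} {h : H} {n : ℕ} {u : H} (hne : Pr f h n u ≠ 1) :
    ∃ l < n, f ((h ^ l)⁻¹ * u) ≠ 1 := by
  by_contra! hc
  exact hne ((Pr_congr (f' := fun _ => 1) hc).trans (Pr_one h n u))

lemma Pr_period {f : H → G} {h : H} {m : ℕ} (hm : h ^ m = 1) (q r : ℕ) (u : H) :
    Pr f h (m * q + r) u = Pr f h m u ^ q * Pr f h r u := by
  induction q with
  | zero => simp
  | succ q ih =>
    rw [show m * (q + 1) + r = m + (m * q + r) by ring, Pr_add, hm, inv_one, one_mul, ih,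
      pow_succ', mul_assoc]

lemma Pr_const_good (hH : KnapsackSemilinear H) {u : M → H} (hu : Good u) {f : H → G}
    (hf : (mulSupport f).Finite) (h : H) (n : ℕ) : Good fun x => Pr f h n (u x) := by
  induction n generalizing u with
  | zero => exact Good.const 1
  | succ n ih => exact (hu.fin hH hf).mul (ih ((Good.const h⁻¹).mul hu))

lemma Pr_support_finite {f : H → G} (hf : (mulSupport f).Finite) (h : H) (n : ℕ) :
    (mulSupport (Pr f h n)).Finite := by
  refine Set.Finite.subset (Set.Finite.biUnion (Finset.range n).finite_toSet
    (t := fun l => (fun b => h ^ l * b) '' mulSupport f) fun l _ => hf.image _) ?_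
  intro u hu
  obtain ⟨l, hl, hlu⟩ := Pr_ne_one hu
  simp only [Set.mem_iUnion]
  exact ⟨l, by simpa using hl, _, hlu, by simp⟩

lemma Pr_good_fin (hH : KnapsackSemilinear H) {u : M → H} (hu : Good u) {f : H → G}
    (hf : (mulSupport f).Finite) {h : H} {m : ℕ} (hm0 : 0 < m) (hm : h ^ m = 1)
    {e : M → ℕ} (he : DF e) : Good fun x => Pr f h (e x) (u x) := by
  have h1 : Good fun x => Pr f h m (u x) ^ (e x / m) :=
    Good.finval hH hu (Pr_support_finite hf h m) (fun a x => Pr f h m a ^ (e x / m))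
      (fun a _ => Good.pow _ (he.div m hm0)) (fun a ha x => by
        have : Pr f h m a = 1 := by simpa using ha
        simp [this])
  have h2 : Good fun x => Pr f h (e x % m) (u x) := by
    refine Good.cover (κ := Fin m) (fun i x => e x % m = i) ?_ ?_ (fun i x => Pr f h i (u x)) ?_ ?_
    · exact fun i => Sem.eq (he.mod m hm0) (DF.const _)
    · exact fun x => ⟨⟨_, Nat.mod_lt _ hm0⟩, rfl⟩
    · exact fun i => Pr_const_good hH hu hf h i
    · intro i x hx
      rw [hx]
  refine (h1.mul h2).congr fun x => ?_
  rw [← Pr_period hm, Nat.div_add_mod]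

lemma Pr_good_inf (hH : KnapsackSemilinear H) {h : H} (hh : ∀ m, 0 < m → h ^ m ≠ 1) (s : Finset H) :
    ∀ {f : H → G}, (∀ a ∉ s, f a = 1) → ∀ {u : M → H}, Good u → ∀ {e : M → ℕ}, DF e →
    Good fun x => Pr f h (e x) (u x) := by
  classical
  induction s using Finset.induction_on with
  | empty =>
    intro f hf u hu e he
    have : f = fun _ => 1 := funext fun a => hf a (by simp)
    refine (Good.const 1).congr fun x => ?_
    rw [this, Pr_one]
  | insert b s hb ih =>
    intro f hf u hu e he
    have hinj : ∀ l l' : ℕ, h ^ l = h ^ l' → l = l' := by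
      intro l l' hl
      by_contra hne
      rcases Nat.lt_or_gt_of_ne hne with hlt | hlt
      · refine hh (l' - l) (by omega) ?_
        rw [pow_sub _ hlt.le, hl, mul_inv_cancel]
      · refine hh (l - l') (by omega) ?_
        rw [pow_sub _ hlt.le, hl, mul_inv_cancel]
    have huniq : ∀ (a : H) (l l' : ℕ), a = h ^ l * b → a = h ^ l' * b → l = l' := fun a l l' h1 h2 =>
      hinj _ _ (mul_right_cancel (h1.symm.trans h2))
    let f' : H → G := Function.update f b 1
    have hf' : ∀ a ∉ s, f' a = 1 := by
      intro a ha
      by_cases hab : a = b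
      · simp [f', hab]
      · simp only [f', Function.update_of_ne hab]
        exact hf a (by simp [hab, ha])
    have hff' : ∀ a, a ≠ b → f a = f' a := fun a ha => by simp [f', Function.update_of_ne ha]
    -- the set of hits
    have hT : Sem fun z : M × ℕ => z.2 < e z.1 ∧ u z.1 = h ^ z.2 * b :=
      (Sem.lt DF.snd (he.comp DF.fst)).and
        ((hu.comp DF.fst).sem_eq hH ((Good.pow h DF.snd).mul (Good.const b)))
    have hS : Sem fun x : M => ∃ l, l < e x ∧ u x = h ^ l * b := hT.exists
    let l : M → ℕ := fun x => if H : ∃ l, l < e x ∧ u x = h ^ l * b then H.choose else 0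
    have hl : ∀ x, (∃ l, l < e x ∧ u x = h ^ l * b) → l x < e x ∧ u x = h ^ (l x) * b := by
      intro x hx
      simp only [l, dif_pos hx]
      exact hx.choose_spec
    have hlDF : DF l := by
      refine (hT.or ((hS.comp DF.fst).not.and (Sem.eq DF.snd (DF.const 0)))).congr ?_
      rintro ⟨x, y⟩
      dsimp only
      by_cases hx : ∃ l, l < e x ∧ u x = h ^ l * b
      · constructor
        · rintro rfl
          exact Or.inl (hl x hx)
        · rintro (hy | hy)
          · exact huniq _ _ _ hy.2 (hl x hx).2
          · exact absurd hx hy.1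
      · have : l x = 0 := by simp only [l, dif_neg hx]
        rw [this]
        constructor
        · exact fun hy => Or.inr ⟨hx, hy⟩
        · rintro (hy | hy)
          · exact absurd ⟨y, hy⟩ hx
          · exact hy.2
    have hu' : Good fun x => (h ^ (l x + 1))⁻¹ * u x :=
      (Good.pow h (hlDF.add (DF.const 1))).inv.mul hu
    have he' : DF fun x => e x - (l x + 1) := he.sub (hlDF.add (DF.const 1))
    refine Good.ite hS (((ih hf' hu hlDF).mul (Good.const (f b))).mul (ih hf' hu' he'))
      (ih hf' hu he) ?_ ?_
    · intro x hx
      obtain ⟨h1, h2⟩ := hl x hx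
      have hne : ∀ k, k ≠ l x → (h ^ k)⁻¹ * u x ≠ b := by
        intro k hk hkb
        exact hk (huniq (u x) _ _ (by rw [← hkb]; simp) h2)
      have e1 : Pr f h (e x) (u x) = Pr f h (l x + (1 + (e x - (l x + 1)))) (u x) := by
        congr 1
        omega
      rw [e1, Pr_add, Pr_add]
      rw [Pr_congr (f' := f') (n := l x), Pr_congr (f' := f') (n := e x - (l x + 1)), mul_assoc]
      · congr 2
        · have : (h ^ l x)⁻¹ * u x = b := by rw [h2]; simp
          simp [Pr, this]
        · congr 1
          rw [pow_one, pow_succ, mul_inv_rev, mul_assoc]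
      · intro k hk
        apply hff'
        have := hne (l x + 1 + k) (by omega)
        rwa [pow_add, pow_add, mul_inv_rev, mul_inv_rev, mul_assoc, mul_assoc] at this
      · intro k hk
        exact hff' _ (hne k (by omega))
    · intro x hx
      refine Pr_congr fun k hk => hff' _ fun hkb => hx ⟨k, hk, ?_⟩
      rw [← hkb]
      simp

lemma Pr_good (hH : KnapsackSemilinear H) {u : M → H} (hu : Good u) {f : H → G}
    (hf : (mulSupport f).Finite) (h : H)
    {e : M → ℕ} (he : DF e) : Good fun x => Pr f h (e x) (u x) := by
  by_cases hh : ∃ m, 0 < m ∧ h ^ m = 1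
  · obtain ⟨m, hm0, hm⟩ := hh
    exact Pr_good_fin hH hu hf hm0 hm he
  · push Not at hh
    exact Pr_good_inf hH hh hf.toFinset (fun a ha => by simpa using ha) hu he

end good

section wreath
universe u v
variable {M : Type} [AddCommMonoid M] [AddMonoid.FG M]
variable {G : Type u} {H : Type v} [Group G] [Group H]

lemma τw_mul (x y : RW G H) (a : H) :
    τw G H (x * y) a = τw G H x a * τw G H y ((σw G H x)⁻¹ * a) := rfl

lemma σw_mul (x y : RW G H) : σw G H (x * y) = σw G H x * σw G H y := rfl

lemma τw_one (a : H) : τw G H 1 a = 1 := rfl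

lemma σw_one : σw G H 1 = 1 := rfl

lemma τw_finite (x : RW G H) : (mulSupport (τw G H x)).Finite := x.2

lemma eq_one_iff (x : RW G H) : x = 1 ↔ σw G H x = 1 ∧ ∀ a, τw G H x a = 1 := by
  constructor
  · rintro rfl
    exact ⟨rfl, fun _ => rfl⟩
  · rintro ⟨h1, h2⟩
    exact Subtype.ext (SemidirectProduct.ext (funext h2) h1)

lemma σw_pow (x : RW G H) (n : ℕ) : σw G H (x ^ n) = σw G H x ^ n := by
  induction n with
  | zero => simp [σw_one]
  | succ n ih => rw [pow_succ', pow_succ', σw_mul, ih]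

lemma τw_pow (x : RW G H) (n : ℕ) (a : H) :
    τw G H (x ^ n) a = Pr (τw G H x) (σw G H x) n a := by
  induction n generalizing a with
  | zero => simp [τw_one, Pr]
  | succ n ih => rw [pow_succ', τw_mul, ih, Pr]

/-- A good wreath-product-valued function: the `H`-component is good, the lamp configuration
evaluated along good curves is good, and the support is covered by finitely many good curves. -/
def WGood (Z : M → RW G H) : Prop :=
  (Good fun x => σw G H (Z x)) ∧
  (∀ u : M × ℕ → H, Good u → Good fun z : M × ℕ => τw G H (Z z.1) (u z)) ∧
  ∃ (κ : Type) (_ : Finite κ) (c : κ → M × ℕ → H), (∀ k, Good (c k)) ∧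
    ∀ x a, τw G H (Z x) a ≠ 1 → ∃ k j, a = c k (x, j)

lemma WGood.mul {Z Z' : M → RW G H} (h : WGood Z) (h' : WGood Z') :
    WGood fun x => Z x * Z' x := by
  obtain ⟨h1, h2, κ, hκ, c, hc, hs⟩ := h
  obtain ⟨h1', h2', κ', hκ', c', hc', hs'⟩ := h'
  have hσ : Good fun z : M × ℕ => σw G H (Z z.1) := h1.comp DF.fst
  refine ⟨h1.mul h1', fun u hu => (h2 u hu).mul (h2' _ (hσ.inv.mul hu)), κ ⊕ κ', inferInstance,
    Sum.elim c fun k z => σw G H (Z z.1) * c' k z, ?_, ?_⟩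
  · rintro (k | k)
    · exact hc k
    · exact hσ.mul (hc' k)
  · intro x a hne
    rw [τw_mul] at hne
    by_cases h0 : τw G H (Z x) a = 1
    · rw [h0, one_mul] at hne
      obtain ⟨k, j, hk⟩ := hs' _ _ hne
      exact ⟨Sum.inr k, j, by simp [← hk]⟩
    · obtain ⟨k, j, hk⟩ := hs _ _ h0
      exact ⟨Sum.inl k, j, hk⟩

lemma WGood.pow (hH : KnapsackSemilinear H) (g : RW G H) {e : M → ℕ} (he : DF e) :
    WGood fun x => g ^ e x := by
  refine ⟨(Good.pow (σw G H g) he).congr fun x => σw_pow _ _, fun u hu => ?_, ?_⟩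
  · exact (Pr_good hH hu (τw_finite g) (σw G H g) (he.comp DF.fst)).congr fun x => τw_pow _ _ _
  · have := (τw_finite g).to_subtype
    obtain ⟨n, ⟨i⟩⟩ := Finite.exists_equiv_fin (mulSupport (τw G H g))
    refine ⟨Fin n, inferInstance, fun k z => σw G H g ^ z.2 * (i.symm k).1,
      fun k => (Good.pow _ DF.snd).mul (Good.const _), ?_⟩
    intro x a hne
    rw [τw_pow] at hne
    obtain ⟨l, hl, hla⟩ := Pr_ne_one hne
    exact ⟨i ⟨_, hla⟩, l, by simp⟩

lemma WGood.const (hH : KnapsackSemilinear H) (g : RW G H) : WGood fun _ : M => g := by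
  have := WGood.pow (M := M) hH g (DF.const 1)
  simpa using this

lemma WGood.list (hH : KnapsackSemilinear H) {k : ℕ} (g h : Fin k → RW G H) (L : List (Fin k)) :
    WGood fun ν : Fin k → ℕ => (L.map fun i => g i ^ ν i * h i).prod := by
  induction L with
  | nil => simpa using WGood.const hH 1
  | cons i L ih =>
    simp only [List.map_cons, List.prod_cons]
    exact ((WGood.pow hH (g i) (DF.hom (Pi.evalAddMonoidHom (fun _ : Fin k => ℕ) i))).mul
      (WGood.const hH (h i))).mul ih

lemma WGood.sem_one (hG : KnapsackSemilinear G) (hH : KnapsackSemilinear H) {Z : M → RW G H}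
    (h : WGood Z) : Sem fun x => Z x = 1 := by
  obtain ⟨h1, h2, κ, hκ, c, hc, hs⟩ := h
  refine ((h1.sem_one hH).and
    (Sem.all fun k => ((h2 _ (hc k)).sem_one hG).forall)).congr fun x => ?_
  rw [eq_one_iff]
  refine and_congr_right fun _ => ⟨fun h k j => h _, fun h a => ?_⟩
  by_contra hne
  obtain ⟨k, j, rfl⟩ := hs x a hne
  exact hne (h k j)

lemma knapsack_wreath (hG : KnapsackSemilinear G) (hH : KnapsackSemilinear H) :
    KnapsackSemilinear (RW G H) := fun _ h0 g h =>
  semilinearSet_of_sem (((WGood.const hH h0).mul (WGood.list hH g h _)).sem_one hG hH)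

lemma knapsack_of_injective {K L : Type*} [Group K] [Group L] (f : K →* L)
    (hf : Function.Injective f) (hL : KnapsackSemilinear L) : KnapsackSemilinear K := by
  intro k h0 g h
  convert hL k (f h0) (fun i => f (g i)) (fun i => f (h i)) using 2
  ext ν
  rw [← map_eq_one_iff f hf, map_mul, map_list_prod, List.map_map]
  simp [Function.comp_def]

/-- The embedding of `G` as a homomorphism. -/
noncomputable def homG [DecidableEq H] : G →* RW G H where
  toFun := embG G H
  map_one' := by
    apply Subtype.ext
    apply SemidirectProduct.ext
    · simp [embG]
    · rfl
  map_mul' x y := by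
    apply Subtype.ext
    apply SemidirectProduct.ext
    · simp [embG, Pi.mulSingle_mul]
    · simp [embG]

lemma homG_injective [DecidableEq H] : Function.Injective (homG (G := G) (H := H)) := by
  intro x y hxy
  have := congrFun (congrArg (τw G H) hxy) 1
  simpa [homG, τw, embG] using this

/-- The embedding of `H` as a homomorphism. -/
def homH : H →* RW G H where
  toFun := embH G H
  map_one' := rfl
  map_mul' x y := by
    apply Subtype.ext
    apply SemidirectProduct.ext
    · simp [embH]
    · rfl

lemma homH_injective : Function.Injective (homH (G := G) (H := H)) := fun _ _ hxy =>
  congrArg (σw G H) hxy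

end wreath

end WProof

open WreathPaper Function in
/-- Every knapsack expression over the (restricted) wreath product `G ≀ H` has
a semilinear solution set if and only if every knapsack expression over `G`
has a semilinear solution set and every knapsack expression over `H` has a
semilinear solution set. -/
theorem statement12 (G H : Type*) [Group G] [Group H] :
    KnapsackSemilinear ↥(RW G H) ↔ KnapsackSemilinear G ∧ KnapsackSemilinear H := by
  classical
  refine ⟨fun h => ⟨?_, ?_⟩, fun h => WProof.knapsack_wreath h.1 h.2⟩
  · exact WProof.knapsack_of_injective WProof.homG WProof.homG_injective h
  · exact WProof.knapsack_of_injective WProof.homH WProof.homH_injective h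
end

section
/- Let G be an abelian group (written additively). For i ∈ [1,n] let q_i ≥ 1 and u_i ∈ G^{q_i}, and let f = Σ_{i=1}^n f_{u_i} (pointwise sum of the associated periodic functions). If there exists a position m ∈ ℕ with f(m) ≠ 0, then there exists a position m < Σ_{i=1}^n q_i with f(m) ≠ 0. -/
open Polynomial in
/-- A sequence killed by a monic polynomial in the shift vanishes if its initial segment does. -/
lemma vanish_of_recurrence {G : Type*} [AddCommGroup G] (P : ℤ[X]) (hP : P.Monic)
    (f : ℕ → G) (h : ∀ m, ∑ j ∈ Finset.range (P.natDegree + 1), P.coeff j • f (m + j) = 0)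
    (h0 : ∀ m < P.natDegree, f m = 0) : ∀ m, f m = 0 := by
  intro m
  induction m using Nat.strong_induction_on with
  | _ m ih =>
    rcases lt_or_ge m P.natDegree with hm | hm
    · exact h0 m hm
    · have := h (m - P.natDegree)
      rw [Finset.sum_range_succ, Finset.sum_eq_zero, hP.coeff_natDegree,
        Nat.sub_add_cancel hm] at this
      · simpa using this
      · intro j hj
        have := Finset.mem_range.1 hj
        rw [ih _ (by omega), smul_zero]

/-- The shift operator on sequences. -/
def shiftEnd (G : Type*) [AddCommGroup G] : Module.End ℤ (ℕ → G) where
  toFun f := fun m => f (m + 1)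
  map_add' _ _ := rfl
  map_smul' _ _ := rfl

lemma shiftEnd_pow {G : Type*} [AddCommGroup G] (j : ℕ) (f : ℕ → G) (m : ℕ) :
    ((shiftEnd G) ^ j) f m = f (m + j) := by
  induction j generalizing m with
  | zero => simp
  | succ j ih =>
    rw [pow_succ', Module.End.mul_apply]
    change ((shiftEnd G) ^ j) f (m + 1) = _
    rw [ih]; congr 1; omega

/-- Let `G` be an abelian group (written additively). For `i ∈ [1,n]` let
`q i ≥ 1` and `u i ∈ G^{q i}`, and let `f = Σ_{i} f_{u i}` be the pointwise sum
of the associated periodic functions (where `f_u (n·q + r) = u r`). If there is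
a position `m` with `f m ≠ 0`, then there is a position `m < Σ_i q i` with
`f m ≠ 0`. -/
theorem statement13 {G : Type*} [AddCommGroup G] (n : ℕ) (q : Fin n → ℕ)
    (hq : ∀ i, 1 ≤ q i) (u : (i : Fin n) → Fin (q i) → G)
    (f : ℕ → G) (hf : ∀ m : ℕ, f m = ∑ i, u i ⟨m % q i, Nat.mod_lt m (hq i)⟩)
    (hex : ∃ m : ℕ, f m ≠ 0) :
    ∃ m : ℕ, m < ∑ i, q i ∧ f m ≠ 0 := by
  by_contra! hc
  obtain ⟨m, hm⟩ := hex
  have hmon : ∀ i, (Polynomial.X ^ q i - 1 : Polynomial ℤ).Monic := fun i => by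
    simpa using Polynomial.monic_X_pow_sub_C (1 : ℤ) (Nat.one_le_iff_ne_zero.1 (hq i))
  have hdeg : ∀ i, (Polynomial.X ^ q i - 1 : Polynomial ℤ).natDegree = q i := fun i => by
    simpa using Polynomial.natDegree_X_pow_sub_C (n := q i) (r := (1 : ℤ))
  have hPdeg : (∏ i, (Polynomial.X ^ q i - 1 : Polynomial ℤ)).natDegree = ∑ i, q i := by
    rw [Polynomial.natDegree_prod_of_monic _ _ (fun i _ => hmon i)]
    simp only [hdeg]
  have hfs : f = ∑ i, fun m => u i ⟨m % q i, Nat.mod_lt m (hq i)⟩ := by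
    funext m
    rw [hf, Finset.sum_apply]
  have key : Polynomial.aeval (shiftEnd G) (∏ i, (Polynomial.X ^ q i - 1 : Polynomial ℤ)) f
      = 0 := by
    rw [hfs, map_sum]
    refine Finset.sum_eq_zero fun i _ => ?_
    rw [← Finset.prod_erase_mul _ _ (Finset.mem_univ i), map_mul, Module.End.mul_apply]
    refine (congrArg _ ?_).trans (LinearMap.map_zero _)
    funext k
    simp only [map_sub, map_pow, Polynomial.aeval_X, map_one, LinearMap.sub_apply,
      Module.End.one_apply, Pi.sub_apply, shiftEnd_pow, Nat.add_mod_right, sub_self,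
      Pi.zero_apply]
  refine hm (vanish_of_recurrence _ (Polynomial.monic_prod_of_monic _ _ fun i _ => hmon i) f
    (fun k => ?_) (fun k hk => hc k (hPdeg ▸ hk)) m)
  have := congrFun key k
  rw [Polynomial.aeval_eq_sum_range] at this
  simpa [LinearMap.sum_apply, Finset.sum_apply, shiftEnd_pow] using this
end

section
/- Let G be a nontrivial abelian group, let g ∈ G with g ≠ 1, let q ≥ 1 and let T = {e₁, …, e_t} ⊆ [1,q] × [1,q] × [1,q]. In G ≀ ℤ, let a = (𝟙, 1) and ḡ = (f_g, 0), and for e_l = (i,j,k) set w_l = a^i ḡ a^{q−i+j} ḡ a^{q−j+k} ḡ a^{−2q−k+(3q+1)l} ḡ a^{−(3q+1)l}. Then T contains a matching — a subset M ⊆ T with |M| = q such that any two distinct triples in M have distinct first coordinates, distinct second coordinates and distinct third coordinates — if and only if there exist n₁, …, n_t, m₁, …, m_{q+1} ∈ ℕ such that w₁^{n₁} ⋯ w_t^{n_t} · (a ḡ^{−1})^{3q} · a^{−3q} · (∏_{i=1}^{q} a^{(3q+1)m_i} ḡ^{−1}) · a^{−(3q+1)m_{q+1}} = 1 in G ≀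 ℤ. -/
namespace Stmt16

open WreathPaper

/-- `a = (𝟙, 1) ∈ G ≀ ℤ` (with `ℤ` written multiplicatively). -/
def aGen (G : Type*) [CommGroup G] : ↥(RW G (Multiplicative ℤ)) :=
  embH G (Multiplicative ℤ) (Multiplicative.ofAdd 1)

/-- `ḡ = (f_g, 0) ∈ G ≀ ℤ`. -/
def gbar {G : Type*} [CommGroup G] (g : G) : ↥(RW G (Multiplicative ℤ)) :=
  embG G (Multiplicative ℤ) g

/-- For `e_l = (i, j, k)` (with `l ∈ [1, t]`, here encoded by `l : Fin t`
standing for `l + 1`), the element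
`w_l = aⁱ ḡ a^{q−i+j} ḡ a^{q−j+k} ḡ a^{−2q−k+(3q+1)l} ḡ a^{−(3q+1)l}`. -/
def w {G : Type*} [CommGroup G] (g : G) (q t : ℕ) (e : Fin t → ℕ × ℕ × ℕ)
    (l : Fin t) : ↥(RW G (Multiplicative ℤ)) :=
  aGen G ^ (((e l).1 : ℤ)) * gbar g *
    aGen G ^ ((q : ℤ) - ((e l).1 : ℤ) + ((e l).2.1 : ℤ)) * gbar g *
    aGen G ^ ((q : ℤ) - ((e l).2.1 : ℤ) + ((e l).2.2 : ℤ)) * gbar g *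
    aGen G ^ (-(2 * (q : ℤ)) - ((e l).2.2 : ℤ)
        + (3 * (q : ℤ) + 1) * (((l : ℕ) : ℤ) + 1)) * gbar g *
    aGen G ^ (-((3 * (q : ℤ) + 1) * (((l : ℕ) : ℤ) + 1)))

end Stmt16

namespace Stmt16

open WreathPaper

section aux

variable {G : Type*} [CommGroup G]

/-- lamp function -/
def Lf (x : ↥(RW G (Multiplicative ℤ))) (z : ℤ) : G := x.1.left (Multiplicative.ofAdd z)

/-- cursor -/
def Rf (x : ↥(RW G (Multiplicative ℤ))) : ℤ := Multiplicative.toAdd x.1.right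

/-- indicator -/
def hh (g : G) (z x : ℤ) : G := if z = x then g else 1

lemma eq_one_iff (x : ↥(RW G (Multiplicative ℤ))) :
    x = 1 ↔ (∀ z, Lf x z = 1) ∧ Rf x = 0 := by
  constructor
  · rintro rfl
    exact ⟨fun z => rfl, rfl⟩
  · rintro ⟨h1, h2⟩
    apply Subtype.ext
    apply SemidirectProduct.ext
    · funext z
      exact h1 (Multiplicative.toAdd z)
    · exact h2

lemma Lf_one (z : ℤ) : Lf (1 : ↥(RW G (Multiplicative ℤ))) z = 1 := rfl
lemma Rf_one : Rf (1 : ↥(RW G (Multiplicative ℤ))) = 0 := rfl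

lemma Lf_mul (x y : ↥(RW G (Multiplicative ℤ))) (z : ℤ) :
    Lf (x * y) z = Lf x z * Lf y (z - Rf x) := by
  have : z - Rf x = -Rf x + z := by ring
  rw [this]
  rfl

lemma Rf_mul (x y : ↥(RW G (Multiplicative ℤ))) : Rf (x * y) = Rf x + Rf y := rfl

lemma Rf_inv (x : ↥(RW G (Multiplicative ℤ))) : Rf x⁻¹ = - Rf x := rfl

lemma Lf_inv (x : ↥(RW G (Multiplicative ℤ))) (z : ℤ) : Lf x⁻¹ z = (Lf x (z + Rf x))⁻¹ := by
  have := Lf_mul x x⁻¹ (z + Rf x)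
  rw [mul_inv_cancel, Lf_one, add_sub_cancel_right] at this
  exact (inv_eq_of_mul_eq_one_right this.symm).symm

lemma Lf_gbar (g : G) (z : ℤ) : Lf (gbar g) z = hh g z 0 := by
  unfold hh
  change (Pi.mulSingle (1 : Multiplicative ℤ) g : Multiplicative ℤ → G) (Multiplicative.ofAdd z) = _
  rw [Pi.mulSingle_apply]
  rfl

lemma Rf_gbar (g : G) : Rf (gbar g) = 0 := rfl

lemma Lf_a_nat (k : ℕ) (z : ℤ) : Lf (aGen G ^ k) z = 1 := by
  induction k generalizing z with
  | zero => rfl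
  | succ k ih => rw [pow_succ, Lf_mul, ih, one_mul]; rfl

lemma Rf_a_nat (k : ℕ) : Rf (aGen G ^ k) = k := by
  induction k with
  | zero => rfl
  | succ k ih => rw [pow_succ, Rf_mul, ih]; push_cast; rfl

lemma Lf_a (k : ℤ) (z : ℤ) : Lf (aGen G ^ k) z = 1 := by
  cases k with
  | ofNat k => exact Lf_a_nat k z
  | negSucc k => rw [zpow_negSucc, Lf_inv, Lf_a_nat, inv_one]

lemma Rf_a (k : ℤ) : Rf (aGen G ^ k) = k := by
  cases k with
  | ofNat k => exact Rf_a_nat k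
  | negSucc k => rw [zpow_negSucc, Rf_inv, Rf_a_nat]; rfl

lemma Rf_w (g : G) (q t : ℕ) (e : Fin t → ℕ × ℕ × ℕ) (l : Fin t) : Rf (w g q t e l) = 0 := by
  simp only [w, Rf_mul, Rf_a, Rf_gbar]
  ring

lemma Lf_w (g : G) (q t : ℕ) (e : Fin t → ℕ × ℕ × ℕ) (l : Fin t) (z : ℤ) :
    Lf (w g q t e l) z = hh g z (e l).1 * hh g z (q + (e l).2.1) * hh g z (2 * q + (e l).2.2) *
      hh g z ((3 * q + 1) * (l + 1)) := by
  simp only [w, Lf_mul, Rf_mul, Lf_a, Rf_a, Rf_gbar, Lf_gbar, one_mul, mul_one]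
  unfold hh
  congr 1
  · congr 1
    · congr 1
      · congr 1
        apply propext; constructor <;> intro h <;> linarith
      · congr 1
        apply propext; constructor <;> intro h <;> linarith
    · congr 1
      apply propext; constructor <;> intro h <;> linarith
  · congr 1
    apply propext; constructor <;> intro h <;> linarith

lemma Rf_pow (x : ↥(RW G (Multiplicative ℤ))) (hx : Rf x = 0) (n : ℕ) : Rf (x ^ n) = 0 := by
  induction n with
  | zero => rfl
  | succ n ih => rw [pow_succ, Rf_mul, ih, hx, add_zero]

lemma Lf_pow (x : ↥(RW G (Multiplicative ℤ))) (hx : Rf x = 0) (n : ℕ) (z : ℤ) :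
    Lf (x ^ n) z = Lf x z ^ n := by
  induction n with
  | zero => simp [Lf_one]
  | succ n ih => rw [pow_succ, Lf_mul, ih, Rf_pow x hx, sub_zero, pow_succ]

lemma Rf_list {ι : Type*} (L : List ι) (x : ι → ↥(RW G (Multiplicative ℤ)))
    (hx : ∀ i, Rf (x i) = 0) : Rf (L.map x).prod = 0 := by
  induction L with
  | nil => rfl
  | cons a L ih => rw [List.map_cons, List.prod_cons, Rf_mul, ih, hx, add_zero]

lemma Lf_list {ι : Type*} (L : List ι) (x : ι → ↥(RW G (Multiplicative ℤ)))
    (hx : ∀ i, Rf (x i) = 0) (z : ℤ) : Lf (L.map x).prod z = (L.map fun i => Lf (x i) z).prod := by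
  induction L with
  | nil => rfl
  | cons a L ih =>
    rw [List.map_cons, List.prod_cons, Lf_mul, hx, sub_zero, ih, List.map_cons, List.prod_cons]

lemma Rf_ag (g : G) (k : ℕ) : Rf ((aGen G * (gbar g)⁻¹) ^ k) = k := by
  induction k with
  | zero => rfl
  | succ k ih => rw [pow_succ, Rf_mul, ih]; push_cast; rfl

lemma Lf_ag (g : G) (k : ℕ) (z : ℤ) :
    Lf ((aGen G * (gbar g)⁻¹) ^ k) z = if 1 ≤ z ∧ z ≤ k then g⁻¹ else 1 := by
  induction k with
  | zero =>
    rw [if_neg (by push_cast; omega)]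
    rfl
  | succ k ih =>
    have ha := Lf_a_nat (G := G) 1
    have hr := Rf_a_nat (G := G) 1
    rw [pow_one] at ha hr
    rw [pow_succ, Lf_mul, ih, Rf_ag, Lf_mul, ha, hr, Lf_inv, Rf_gbar, Lf_gbar]
    unfold hh
    push_cast
    split_ifs <;> first | omega | simp

lemma Rf_tail (g : G) (N : ℕ) (m : ℕ → ℕ) (k : ℕ) :
    Rf ((List.range k).map fun i => aGen G ^ (N * m i) * (gbar g)⁻¹).prod =
      N * ∑ j ∈ Finset.range k, (m j : ℤ) := by
  induction k with
  | zero => simp [Rf_one]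
  | succ k ih =>
    rw [List.range_succ, List.map_append, List.prod_append, Rf_mul, ih, List.map_singleton,
      List.prod_singleton, Rf_mul, Rf_a_nat, Rf_inv, Rf_gbar, Finset.sum_range_succ]
    push_cast; ring

lemma Lf_tail (g : G) (N : ℕ) (m : ℕ → ℕ) (k : ℕ) (z : ℤ) :
    Lf ((List.range k).map fun i => aGen G ^ (N * m i) * (gbar g)⁻¹).prod z =
      ∏ i ∈ Finset.range k, (hh g z (N * ∑ j ∈ Finset.range (i + 1), (m j : ℤ)))⁻¹ := by
  induction k with
  | zero => simp [Lf_one]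
  | succ k ih =>
    rw [List.range_succ, List.map_append, List.prod_append, Lf_mul, ih, List.map_singleton,
      List.prod_singleton, Lf_mul, Lf_a_nat, Rf_a_nat, Lf_inv, Rf_gbar, Finset.prod_range_succ,
      Rf_tail, Lf_gbar, Finset.sum_range_succ, one_mul]
    congr 2
    unfold hh
    congr 1
    push_cast
    apply propext; constructor <;> intro h <;> linarith

/-- The equation, translated. -/
lemma main_iff (g : G) (q t : ℕ) (e : Fin t → ℕ × ℕ × ℕ) (n : Fin t → ℕ) (m : ℕ → ℕ) (M : ℕ) :
    ((List.finRange t).map fun l => w g q t e l ^ n l).prod *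
        (aGen G * (gbar g)⁻¹) ^ (3 * q) *
        aGen G ^ (-(3 * (q : ℤ))) *
        ((List.range q).map fun i =>
          aGen G ^ ((3 * q + 1) * m i) * (gbar g)⁻¹).prod *
        aGen G ^ (-((3 * (q : ℤ) + 1) * (M : ℤ))) = 1 ↔
    (∀ z : ℤ, (∏ l, (hh g z (e l).1 * hh g z (q + (e l).2.1) * hh g z (2 * q + (e l).2.2) *
      hh g z ((3 * q + 1) * (l + 1))) ^ n l) * (if 1 ≤ z ∧ z ≤ 3 * q then g⁻¹ else 1) *
      ∏ i ∈ Finset.range q, (hh g z ((3 * q + 1) * ∑ j ∈ Finset.range (i + 1), (m j : ℤ)))⁻¹ = 1) ∧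
    ∑ j ∈ Finset.range q, m j = M := by
  have h0 : ∀ l, Rf (w g q t e l ^ n l) = 0 := fun l => Rf_pow _ (Rf_w ..) _
  rw [eq_one_iff]
  apply and_congr
  · apply forall_congr'
    intro z
    rw [Lf_mul, Lf_a, mul_one, Lf_mul, Rf_mul, Rf_mul, Lf_mul, Lf_a, mul_one, Lf_mul,
      Rf_list _ _ h0, Rf_ag, Rf_a, Lf_list _ _ h0, Lf_ag, Lf_tail]
    have h1 : (fun l => Lf (w g q t e l ^ n l) z) = fun l => (hh g z (e l).1 *
        hh g z (q + (e l).2.1) * hh g z (2 * q + (e l).2.2) *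
      hh g z ((3 * q + 1) * (l + 1))) ^ n l := by
      funext l
      rw [Lf_pow _ (Rf_w ..), Lf_w]
    rw [h1, ← List.ofFn_eq_map, List.prod_ofFn]
    push_cast
    simp only [sub_zero, zero_add, add_neg_cancel]
  · rw [Rf_mul, Rf_mul, Rf_mul, Rf_mul, Rf_list _ _ h0, Rf_ag, Rf_a, Rf_a, Rf_tail]
    push_cast
    have hN : (3 * (q : ℤ) + 1) ≠ 0 := by positivity
    constructor
    · intro h
      have : (3 * (q : ℤ) + 1) * (∑ j ∈ Finset.range q, (m j : ℤ)) = (3 * (q : ℤ) + 1) * M := by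
        linarith
      exact_mod_cast mul_left_cancel₀ hN this
    · intro h
      rw [← h]; push_cast; ring

lemma tail_list (g : G) (q : ℕ) (m : Fin (q + 1) → ℕ) (m' : ℕ → ℕ)
    (h : ∀ i : Fin q, m' i = m i.castSucc) :
    ((List.finRange q).map fun i =>
          aGen G ^ ((3 * q + 1) * m i.castSucc) * (gbar g)⁻¹).prod =
    ((List.range q).map fun i =>
          aGen G ^ ((3 * q + 1) * m' i) * (gbar g)⁻¹).prod := by
  congr 1
  simp only [← h]
  rw [← List.map_coe_finRange_eq_range, List.map_map]
  rfl

lemma fibre_one (q t : ℕ) (p c : Fin t → ℕ) (hp : ∀ l, 1 ≤ p l ∧ p l ≤ q)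
    (hc : ∑ l, c l ≤ q) (h : ∀ i ∈ Finset.Icc 1 q, ∑ l with p l = i, c l ≠ 0) :
    (∀ i ∈ Finset.Icc 1 q, ∑ l with p l = i, c l = 1) ∧ ∑ l, c l = q := by
  have h1 : ∑ i ∈ Finset.Icc 1 q, ∑ l with p l = i, c l = ∑ l, c l :=
    Finset.sum_fiberwise_of_maps_to (fun l _ => Finset.mem_Icc.2 (hp l)) _
  have h2 : ∀ i ∈ Finset.Icc 1 q, 1 ≤ ∑ l with p l = i, c l := fun i hi =>
    Nat.one_le_iff_ne_zero.2 (h i hi)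
  have h3 : ∑ i ∈ Finset.Icc 1 q, 1 = q := by simp
  have h4 := Finset.sum_le_sum h2
  have h5 : ∑ l, c l = q := by omega
  refine ⟨fun i hi => ?_, h5⟩
  exact ((Finset.sum_eq_sum_iff_of_le h2).1 (by omega) i hi).symm

lemma fibre_inj (q t : ℕ) (p c : Fin t → ℕ) (hp : ∀ l, 1 ≤ p l ∧ p l ≤ q)
    (h : ∀ i ∈ Finset.Icc 1 q, ∑ l with p l = i, c l = 1) (l l' : Fin t) (hl : c l ≠ 0)
    (hl' : c l' ≠ 0) (hne : l ≠ l') : p l ≠ p l' := by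
  intro hpp
  have h1 := h (p l) (Finset.mem_Icc.2 (hp l))
  have h2 : ∑ x ∈ {l, l'}, c x ≤ ∑ x with p x = p l, c x := by
    apply Finset.sum_le_sum_of_subset
    intro x hx
    simp only [Finset.mem_insert, Finset.mem_singleton] at hx
    rcases hx with rfl | rfl <;> simp [hpp]
  rw [Finset.sum_pair hne] at h2
  omega

lemma prod_hh (g : G) (q : ℕ) (c z : ℤ) :
    ∏ i ∈ Finset.Icc 1 q, hh g z (c + i) = if c + 1 ≤ z ∧ z ≤ c + q then g else 1 := by
  induction q with
  | zero => rw [if_neg (by push_cast; omega)]; simp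
  | succ q ih =>
    rw [Finset.prod_Icc_succ_top (by omega), ih]
    unfold hh
    push_cast
    split_ifs <;> first | omega | simp

lemma prod_matching (g : G) (q t : ℕ) (p : Fin t → ℕ) (hp : ∀ l, 1 ≤ p l ∧ p l ≤ q)
    (M : Finset (Fin t)) (hM : M.card = q) (hinj : ∀ l ∈ M, ∀ l' ∈ M, l ≠ l' → p l ≠ p l')
    (c z : ℤ) : ∏ l ∈ M, hh g z (c + p l) = if c + 1 ≤ z ∧ z ≤ c + q then g else 1 := by
  have hi : Set.InjOn p M := by
    intro a ha b hb hab
    by_contra hne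
    exact hinj a ha b hb hne hab
  have him : M.image p = Finset.Icc 1 q := by
    apply Finset.eq_of_subset_of_card_le
    · intro x hx
      obtain ⟨l, _, rfl⟩ := Finset.mem_image.1 hx
      exact Finset.mem_Icc.2 (hp l)
    · rw [Finset.card_image_of_injOn hi, hM]; simp
  rw [← prod_hh, ← him, Finset.prod_image hi]

lemma exists_partial_sums (q : ℕ) (s : Fin q → ℕ) (hs : Monotone s) :
    ∃ m : ℕ → ℕ, ∀ i : Fin q, ∑ j ∈ Finset.range (i + 1), m j = s i := by
  refine ⟨fun j => if h : j < q then s ⟨j, h⟩ - (if h0 : j = 0 then 0 else s ⟨j - 1, by omega⟩) else 0,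
    ?_⟩
  rintro ⟨i, hi⟩
  induction i with
  | zero => simp [hi]
  | succ i ih =>
    rw [Finset.sum_range_succ, ih (by omega)]
    have : s ⟨i, by omega⟩ ≤ s ⟨i + 1, hi⟩ := hs (by simp)
    simp [hi]
    omega

lemma prod_hpow (g : G) (t : ℕ) (p c n : Fin t → ℕ) (z x : ℤ) (i : ℕ) (hz : ∀ l, z = x + p l ↔ p l = i)
    (hn : ∀ l, g ^ n l = g ^ c l) :
    ∏ l, hh g z (x + p l) ^ n l = g ^ ∑ l with p l = i, c l := by
  rw [← Finset.prod_pow_eq_pow_sum, Finset.prod_filter]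
  apply Finset.prod_congr rfl
  intro l _
  unfold hh
  by_cases h : p l = i
  · rw [if_pos ((hz l).2 h), if_pos h, hn]
  · rw [if_neg (fun h' => h ((hz l).1 h')), if_neg h, one_pow]

end aux

end Stmt16

open WreathPaper Stmt16 in
/-- Let `G` be a nontrivial abelian group, `g ∈ G` with `g ≠ 1`, `q ≥ 1` and
`T = {e₁, …, e_t} ⊆ [1,q]³`.  Then `T` contains a matching (a subset `M ⊆ T`
with `|M| = q` whose triples have pairwise distinct first, second and third
coordinates) if and only if there are `n₁, …, n_t, m₁, …, m_{q+1} ∈ ℕ` with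
`w₁^{n₁} ⋯ w_t^{n_t} · (a ḡ⁻¹)^{3q} · a^{−3q} · (∏_{i=1}^{q} a^{(3q+1)mᵢ} ḡ⁻¹)
· a^{−(3q+1)m_{q+1}} = 1` in `G ≀ ℤ`. -/
theorem statement16 {G : Type*} [CommGroup G] (g : G) (hg : g ≠ 1)
    (q t : ℕ) (hq : 1 ≤ q) (e : Fin t → ℕ × ℕ × ℕ)
    (he : Function.Injective e)
    (hrange : ∀ l : Fin t,
      (1 ≤ (e l).1 ∧ (e l).1 ≤ q) ∧ (1 ≤ (e l).2.1 ∧ (e l).2.1 ≤ q) ∧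
        (1 ≤ (e l).2.2 ∧ (e l).2.2 ≤ q)) :
    (∃ M : Finset (Fin t), M.card = q ∧
        ∀ l ∈ M, ∀ l' ∈ M, l ≠ l' →
          (e l).1 ≠ (e l').1 ∧ (e l).2.1 ≠ (e l').2.1 ∧ (e l).2.2 ≠ (e l').2.2) ↔
    (∃ (n : Fin t → ℕ) (m : Fin (q + 1) → ℕ),
      ((List.finRange t).map fun l => w g q t e l ^ n l).prod *
        (aGen G * (gbar g)⁻¹) ^ (3 * q) *
        aGen G ^ (-(3 * (q : ℤ))) *
        ((List.finRange q).map fun i =>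
          aGen G ^ ((3 * q + 1) * m i.castSucc) * (gbar g)⁻¹).prod *
        aGen G ^ (-((3 * (q : ℤ) + 1) * (m (Fin.last q) : ℤ))) = 1) := by
  constructor
  · rintro ⟨M, hM, hinj⟩
    obtain ⟨m, hm⟩ := exists_partial_sums q (fun i => (M.orderEmbOfFin hM i : ℕ) + 1)
      (fun a b hab => by
        have := (M.orderEmbOfFin hM).monotone hab
        have h2 : (M.orderEmbOfFin hM a : ℕ) ≤ M.orderEmbOfFin hM b := this
        simpa using h2)
    refine ⟨fun l => if l ∈ M then 1 else 0,
      fun i => if (i : ℕ) < q then m i else ∑ j ∈ Finset.range q, m j, ?_⟩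
    rw [tail_list g q (fun i => if (i : ℕ) < q then m i else ∑ j ∈ Finset.range q, m j) m
      (fun i => by simp), main_iff]
    refine ⟨fun z => ?_, by simp⟩
    have h1 : ∀ f : Fin t → G, ∏ l, f l ^ (if l ∈ M then 1 else 0) = ∏ l ∈ M, f l := by
      intro f
      rw [← Finset.prod_subset (Finset.subset_univ M)]
      · apply Finset.prod_congr rfl
        intro l hl
        simp [hl]
      · intro l _ hl
        simp [hl]
    have h2 : ∏ i ∈ Finset.range q, (hh g z ((3 * q + 1) *
        ∑ j ∈ Finset.range (i + 1), (m j : ℤ)))⁻¹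
        = ∏ l ∈ M, (hh g z ((3 * q + 1) * (l + 1)))⁻¹ := by
      rw [Finset.prod_range, ← Finset.prod_coe_sort M]
      apply Fintype.prod_equiv (M.orderIsoOfFin hM).toEquiv
      intro i
      have := hm i
      have h3 : (∑ j ∈ Finset.range ((i : ℕ) + 1), (m j : ℤ)) =
        ((M.orderEmbOfFin hM i : ℕ) : ℤ) + 1 := by exact_mod_cast this
      rw [h3]
      rfl
    rw [h1, h2, Finset.prod_mul_distrib, Finset.prod_mul_distrib, Finset.prod_mul_distrib,
      Finset.prod_inv_distrib]
    have p1 := prod_matching g q t (fun l => (e l).1) (fun l => (hrange l).1) M hM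
      (fun l hl l' hl' h => (hinj l hl l' hl' h).1) 0 z
    have p2 := prod_matching g q t (fun l => (e l).2.1) (fun l => (hrange l).2.1) M hM
      (fun l hl l' hl' h => (hinj l hl l' hl' h).2.1) q z
    have p3 := prod_matching g q t (fun l => (e l).2.2) (fun l => (hrange l).2.2) M hM
      (fun l hl l' hl' h => (hinj l hl l' hl' h).2.2) (2 * q) z
    simp only [zero_add] at p1
    rw [p1, p2, p3]
    generalize (∏ l ∈ M, hh g z ((3 * q + 1) * (l + 1))) = X
    split_ifs <;> first | omega | simp
  · rintro ⟨n, m, h⟩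
    obtain ⟨m', hm'⟩ : ∃ m' : ℕ → ℕ, ∀ i : Fin q, m' i = m i.castSucc :=
      ⟨fun i => if h : i < q then m ⟨i, by omega⟩ else 0, fun i => by simp; rfl⟩
    rw [tail_list g q m m' hm', main_iff] at h
    obtain ⟨h, -⟩ := h
    have hs : ∃ s : ℕ → ℕ, ∀ i, (∑ j ∈ Finset.range (i + 1), (m' j : ℤ)) = s i :=
      ⟨fun i => ∑ j ∈ Finset.range (i + 1), m' j, fun i => by push_cast; rfl⟩
    obtain ⟨s, hs⟩ := hs
    simp only [hs] at h
    set c : Fin t → ℕ := fun l => ((Finset.range q).filter fun i => s i = l + 1).card with hcdef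
    have hmod : ∀ (x y : ℤ), 1 ≤ x → x ≤ 3 * q → x ≠ (3 * q + 1) * y := by
      intro x y h1 h2 h3
      have : y ≤ 0 ∨ 1 ≤ y := by omega
      rcases this with h4 | h4 <;> nlinarith
    -- marker positions
    have hn : ∀ l, g ^ n l = g ^ c l := by
      intro l
      have hl := h ((3 * q + 1) * (l + 1))
      rw [if_neg] at hl
      swap
      · rintro ⟨h1, h2⟩
        exact hmod _ _ h1 h2 rfl
      have hN : (3 * (q : ℤ) + 1) ≠ 0 := by positivity
      have hne : ∀ x : ℤ, 1 ≤ x → x ≤ 3 * q → hh g ((3 * q + 1) * (l + 1)) x = 1 := by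
        intro x h1 h2
        exact if_neg (hmod x _ h1 h2).symm
      have e1 : (∏ l', (hh g ((3 * q + 1) * (l + 1)) (e l').1 *
          hh g ((3 * q + 1) * (l + 1)) (q + (e l').2.1) *
          hh g ((3 * q + 1) * (l + 1)) (2 * q + (e l').2.2) *
          hh g ((3 * q + 1) * (l + 1)) ((3 * q + 1) * (l' + 1))) ^ n l') = g ^ n l := by
        rw [Finset.prod_eq_single l]
        · have := hrange l
          rw [hne _ (by omega) (by omega), hne _ (by omega) (by omega),
            hne _ (by omega) (by omega)]
          simp [hh]
        · intro l' _ hll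
          have := hrange l'
          rw [hne _ (by omega) (by omega), hne _ (by omega) (by omega),
            hne _ (by omega) (by omega)]
          have : hh g ((3 * q + 1) * (l + 1)) ((3 * q + 1) * (l' + 1)) = 1 := by
            apply if_neg
            intro h5
            have := mul_left_cancel₀ hN h5
            apply hll
            ext
            omega
          rw [this]; simp
        · simp
      have e2 : ∏ i ∈ Finset.range q, (hh g ((3 * q + 1) * (l + 1))
          ((3 * q + 1) * (s i : ℤ)))⁻¹ = (g ^ c l)⁻¹ := by
        rw [Finset.prod_inv_distrib, hcdef, ← Finset.prod_const, Finset.prod_filter]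
        congr 1
        apply Finset.prod_congr rfl
        intro i _
        unfold hh
        congr 1
        apply propext
        rw [mul_right_inj' hN]
        omega
      rw [e1, e2, mul_one] at hl
      exact mul_inv_eq_one.1 hl
    have hcq : ∑ l, c l ≤ q := by
      rw [hcdef, ← Finset.card_biUnion]
      · calc _ ≤ (Finset.range q).card := Finset.card_le_card (by
              intro i hi
              simp only [Finset.mem_biUnion, Finset.mem_filter] at hi
              obtain ⟨_, _, h1, _⟩ := hi
              exact h1)
          _ = q := by simp
      · intro l _ l' _ hll
        rw [Function.onFun, Finset.disjoint_left]
        intro i h1 h2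
        simp only [Finset.mem_filter] at h1 h2
        apply hll
        ext
        omega
    have key : ∀ z : ℤ, 1 ≤ z → z ≤ 3 * q → (∏ l, hh g z (0 + (e l).1) ^ n l) *
        (∏ l, hh g z (q + (e l).2.1) ^ n l) * (∏ l, hh g z (2 * q + (e l).2.2) ^ n l) = g := by
      intro z h1 h2
      have hz := h z
      rw [if_pos ⟨h1, h2⟩] at hz
      have hne : ∀ x : ℤ, hh g z ((3 * q + 1) * x) = 1 := fun x => if_neg (hmod z x h1 h2)
      simp only [hne, mul_one, inv_one, Finset.prod_const_one, mul_pow,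
        Finset.prod_mul_distrib] at hz
      simp only [zero_add]
      exact mul_inv_eq_one.1 hz
    have triv : ∀ (p : Fin t → ℕ) (x z : ℤ), (∀ l, z ≠ x + p l) →
        ∏ l, hh g z (x + p l) ^ n l = 1 := by
      intro p x z hp
      apply Finset.prod_eq_one
      intro l _
      rw [hh, if_neg (hp l), one_pow]
    have k1 : ∀ i ∈ Finset.Icc 1 q, ∑ l with (e l).1 = i, c l ≠ 0 := by
      intro i hi h0
      rw [Finset.mem_Icc] at hi
      have := key (0 + i) (by omega) (by omega)
      rw [prod_hpow g t (fun l => (e l).1) c n _ 0 i (fun l => by omega) hn, h0,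
        triv (fun l => (e l).2.1) _ _ (fun l => by have := hrange l; omega),
        triv (fun l => (e l).2.2) _ _ (fun l => by have := hrange l; omega)] at this
      apply hg
      simpa using this.symm
    have k2 : ∀ i ∈ Finset.Icc 1 q, ∑ l with (e l).2.1 = i, c l ≠ 0 := by
      intro i hi h0
      rw [Finset.mem_Icc] at hi
      have := key (q + i) (by omega) (by omega)
      rw [prod_hpow g t (fun l => (e l).2.1) c n _ q i (fun l => by omega) hn, h0,
        triv (fun l => (e l).1) _ _ (fun l => by have := hrange l; omega),
        triv (fun l => (e l).2.2) _ _ (fun l => by have := hrange l; omega)] at this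
      apply hg
      simpa using this.symm
    have k3 : ∀ i ∈ Finset.Icc 1 q, ∑ l with (e l).2.2 = i, c l ≠ 0 := by
      intro i hi h0
      rw [Finset.mem_Icc] at hi
      have := key (2 * q + i) (by omega) (by omega)
      rw [prod_hpow g t (fun l => (e l).2.2) c n _ (2 * q) i (fun l => by omega) hn, h0,
        triv (fun l => (e l).1) _ _ (fun l => by have := hrange l; omega),
        triv (fun l => (e l).2.1) _ _ (fun l => by have := hrange l; omega)] at this
      apply hg
      simpa using this.symm
    obtain ⟨f1, fq⟩ := fibre_one q t (fun l => (e l).1) c (fun l => (hrange l).1) hcq k1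
    obtain ⟨f2, -⟩ := fibre_one q t (fun l => (e l).2.1) c (fun l => (hrange l).2.1) hcq k2
    obtain ⟨f3, -⟩ := fibre_one q t (fun l => (e l).2.2) c (fun l => (hrange l).2.2) hcq k3
    refine ⟨Finset.univ.filter fun l => c l ≠ 0, ?_, ?_⟩
    · rw [Finset.card_filter]
      refine Eq.trans (Finset.sum_congr rfl fun l _ => ?_) fq
      have h1 : c l ≤ ∑ x with (e x).1 = (e l).1, c x :=
        Finset.single_le_sum (f := c) (fun _ _ => Nat.zero_le _) (by simp)
      have h2 := f1 (e l).1 (Finset.mem_Icc.2 (hrange l).1)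
      split_ifs <;> omega
    · intro l hl l' hl' hne
      simp only [Finset.mem_filter, Finset.mem_univ, true_and] at hl hl'
      exact ⟨fibre_inj q t (fun l => (e l).1) c (fun l => (hrange l).1) f1 l l' hl hl' hne,
        fibre_inj q t (fun l => (e l).2.1) c (fun l => (hrange l).2.1) f2 l l' hl hl' hne,
        fibre_inj q t (fun l => (e l).2.2) c (fun l => (hrange l).2.2) f3 l l' hl hl' hne⟩
end
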